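/- Let A = kQ/I be a gentle algebra with finite global dimension (equivalently, (Q, I) has no oriented cycle with full relations). Then the left and right self-injective dimensions of A both equal gl.dim A, and this common value equals the maximum length of a forbidden thread of A. -/

import Mathlib

open MulOpposite DirectSum

set_option autoImplicit false

/-- The combinatorial data of a finite quiver together with a set of
length-two relations (`rel a b` means that the length-two path `a·b` lies in
the admissible ideal `I`). -/
structure GentleData : Type 1 where
  V : Type
  A : Type
  [fintypeV : Fintype V]
  [fintypeA : Fintype A]
  [decEqV : DecidableEq V]
  [decEqA : DecidableEq A]
  src : A → V
  tgt : A → V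
  rel : A → A → Prop

attribute [instance] GentleData.fintypeV GentleData.fintypeA GentleData.decEqV GentleData.decEqA

/-- The gentleness conditions on a bound quiver `(Q, I)`:
relations are composable length-two paths; at most two arrows start
(resp. end) at every vertex; for every arrow `β` there is at most one arrow `α`
with `αβ ∉ I` and at most one with `αβ ∈ I`, and dually; and there is a bound
on the length of paths avoiding relations (admissibility). -/
def IsGentle (Q : GentleData) : Prop :=
  (∀ a b, Q.rel a b → Q.tgt a = Q.src b) ∧
  (∀ v : Q.V, Set.ncard {a : Q.A | Q.src a = v} ≤ 2) ∧
  (∀ v : Q.V, Set.ncard {a : Q.A | Q.tgt a = v} ≤ 2) ∧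
  (∀ b : Q.A, Set.ncard {a : Q.A | Q.tgt a = Q.src b ∧ ¬ Q.rel a b} ≤ 1) ∧
  (∀ b : Q.A, Set.ncard {a : Q.A | Q.tgt a = Q.src b ∧ Q.rel a b} ≤ 1) ∧
  (∀ a : Q.A, Set.ncard {b : Q.A | Q.src b = Q.tgt a ∧ ¬ Q.rel a b} ≤ 1) ∧
  (∀ a : Q.A, Set.ncard {b : Q.A | Q.src b = Q.tgt a ∧ Q.rel a b} ≤ 1) ∧
  (∃ N : ℕ, ∀ p : ℕ → Q.A, ¬ ∀ i, i < N → (Q.tgt (p i) = Q.src (p (i+1)) ∧ ¬ Q.rel (p i) (p (i+1))))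

/-- Generators of the path algebra: one generator for each vertex (the
corresponding trivial path) and one for each arrow. -/
inductive GenSym (Q : GentleData) : Type
  | vertex : Q.V → GenSym Q
  | arrow : Q.A → GenSym Q

/-- The defining relations of the algebra `kQ/I`: the trivial paths are
orthogonal idempotents summing to `1`, arrows are compatible with the trivial
paths at their source and target, and the chosen length-two paths vanish. -/
inductive GentleRel (k : Type) [Field k] (Q : GentleData) :
    FreeAlgebra k (GenSym Q) → FreeAlgebra k (GenSym Q) → Prop
  | idem (v : Q.V) : GentleRel k Q
      (FreeAlgebra.ι k (GenSym.vertex v) * FreeAlgebra.ι k (GenSym.vertex v))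
      (FreeAlgebra.ι k (GenSym.vertex v))
  | orth (v w : Q.V) (h : v ≠ w) : GentleRel k Q
      (FreeAlgebra.ι k (GenSym.vertex v) * FreeAlgebra.ι k (GenSym.vertex w)) 0
  | sum_idem : GentleRel k Q (∑ v : Q.V, FreeAlgebra.ι k (GenSym.vertex v)) 1
  | src_mul (a : Q.A) : GentleRel k Q
      (FreeAlgebra.ι k (GenSym.vertex (Q.src a)) * FreeAlgebra.ι k (GenSym.arrow a))
      (FreeAlgebra.ι k (GenSym.arrow a))
  | mul_tgt (a : Q.A) : GentleRel k Q
      (FreeAlgebra.ι k (GenSym.arrow a) * FreeAlgebra.ι k (GenSym.vertex (Q.tgt a)))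
      (FreeAlgebra.ι k (GenSym.arrow a))
  | relation (a b : Q.A) (h : Q.rel a b) : GentleRel k Q
      (FreeAlgebra.ι k (GenSym.arrow a) * FreeAlgebra.ι k (GenSym.arrow b)) 0

/-- The algebra `A = kQ/I` presented by the bound quiver `Q`. -/
abbrev GentleAlgebra (k : Type) [Field k] (Q : GentleData) : Type :=
  RingQuot (GentleRel k Q)

/-- The image in `kQ/I` of a generator. -/
noncomputable def ofGen (k : Type) [Field k] (Q : GentleData) (x : GenSym Q) :
    GentleAlgebra k Q :=
  RingQuot.mkAlgHom k (GentleRel k Q) (FreeAlgebra.ι k x)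

/-- The idempotent `e_v ∈ kQ/I` of a vertex `v`. -/
noncomputable def idemOf (k : Type) [Field k] (Q : GentleData) (v : Q.V) :
    GentleAlgebra k Q :=
  ofGen k Q (GenSym.vertex v)

/-- The element of `kQ/I` given by an arrow `a`. -/
noncomputable def arrOf (k : Type) [Field k] (Q : GentleData) (a : Q.A) :
    GentleAlgebra k Q :=
  ofGen k Q (GenSym.arrow a)

/-- The indecomposable projective right module `e_v A`, as a right submodule
(i.e. `Aᵐᵒᵖ`-submodule) of `A`. -/
noncomputable def vertexModule (k : Type) [Field k] (Q : GentleData) (v : Q.V) :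
    Submodule (GentleAlgebra k Q)ᵐᵒᵖ (GentleAlgebra k Q) :=
  Submodule.span (GentleAlgebra k Q)ᵐᵒᵖ {idemOf k Q v}

/-- The right module `αA` generated by an arrow `α`, as a right submodule of `A`. -/
noncomputable def arrowModule (k : Type) [Field k] (Q : GentleData) (a : Q.A) :
    Submodule (GentleAlgebra k Q)ᵐᵒᵖ (GentleAlgebra k Q) :=
  Submodule.span (GentleAlgebra k Q)ᵐᵒᵖ {arrOf k Q a}

/-- An oriented cycle `c` of length `ℓ` with full relations:
`t(cᵢ) = s(cᵢ₊₁)` and `cᵢ cᵢ₊₁ ∈ I` for all `i` (indices modulo `ℓ`). -/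
def IsOCFCycle (Q : GentleData) {ℓ : ℕ} (c : ZMod ℓ → Q.A) : Prop :=
  ∀ i : ZMod ℓ, Q.tgt (c i) = Q.src (c (i + 1)) ∧ Q.rel (c i) (c (i + 1))

/-- The arrow `a` lies on some oriented cycle with full relations. -/
def OnOCFCycle (Q : GentleData) (a : Q.A) : Prop :=
  ∃ ℓ : ℕ, 1 ≤ ℓ ∧ ∃ c : ZMod ℓ → Q.A, IsOCFCycle Q c ∧ ∃ i : ZMod ℓ, c i = a

/-- The whole quiver `(Q, I)` is an oriented cycle of some length `ℓ ≥ 1` with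
full relations. -/
def QuiverIsOCF (Q : GentleData) : Prop :=
  ∃ ℓ : ℕ, 1 ≤ ℓ ∧ ∃ (e : Q.V ≃ ZMod ℓ) (f : Q.A ≃ ZMod ℓ),
    (∀ a, e (Q.src a) = f a) ∧ (∀ a, e (Q.tgt a) = f a + 1) ∧
    (∀ a b, Q.rel a b ↔ f b = f a + 1)

/-- The quiver `(Q, I)` is a single point: exactly one vertex and no arrows. -/
def QuiverIsPoint (Q : GentleData) : Prop :=
  (∃ v : Q.V, ∀ w : Q.V, w = v) ∧ IsEmpty Q.A

/-- `v` is a common vertex of two distinct oriented cycles with full relations. -/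
def TwoCyclesAt (Q : GentleData) (v : Q.V) : Prop :=
  ∃ (ℓ ℓ' : ℕ), 1 ≤ ℓ ∧ 1 ≤ ℓ' ∧ ∃ (c : ZMod ℓ → Q.A) (c' : ZMod ℓ' → Q.A),
    IsOCFCycle Q c ∧ IsOCFCycle Q c' ∧ Function.Injective c ∧ Function.Injective c' ∧
    (∃ i, Q.tgt (c i) = v) ∧ (∃ j, Q.tgt (c' j) = v) ∧ Set.range c ≠ Set.range c'

/-- The set of vertices lying on an oriented cycle with full relations. -/
def ocfVertexSet (Q : GentleData) : Set Q.V :=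
  {v | ∃ a : Q.A, OnOCFCycle Q a ∧ Q.tgt a = v}

/-- Oriented cycles with full relations, identified up to cyclic rotation. -/
def ocfCycleSetoid (Q : GentleData) (ℓ : ℕ) :
    Setoid {c : ZMod ℓ → Q.A // IsOCFCycle Q c ∧ Function.Injective c} where
  r c c' := ∃ t : ZMod ℓ, ∀ i, c'.1 i = c.1 (i + t)
  iseqv := by
    refine ⟨fun c => ⟨0, fun i => by rw [add_zero]⟩, ?_, ?_⟩
    · rintro c c' ⟨t, ht⟩
      exact ⟨-t, fun i => by rw [ht (i + -t), neg_add_cancel_right]⟩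
    · rintro a b c ⟨t, ht⟩ ⟨s, hs⟩
      exact ⟨s + t, fun i => by rw [hs i, ht (i + s), add_assoc]⟩

/-- `AGzero Q ℓ` is the value `φ_A(0, ℓ)` of the AG-invariant: the number of
oriented cycles of length `ℓ` with full relations, counted up to rotation. -/
noncomputable def AGzero (Q : GentleData) (ℓ : ℕ) : ℕ :=
  Nat.card (Quotient (ocfCycleSetoid Q ℓ))

/-- A (nontrivial) forbidden path with arrows `p 0, …, p (m-1)`:
all consecutive length-two subpaths lie in `I`. -/
def IsForbiddenPath (Q : GentleData) (m : ℕ) (p : ℕ → Q.A) : Prop :=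
  ∀ i : ℕ, i + 1 < m → Q.tgt (p i) = Q.src (p (i + 1)) ∧ Q.rel (p i) (p (i + 1))

/-- A (nontrivial) forbidden thread: a maximal forbidden path (of `m ≥ 1`
arrows), i.e. one which cannot be extended on either side. -/
def IsForbiddenThread (Q : GentleData) (m : ℕ) (p : ℕ → Q.A) : Prop :=
  1 ≤ m ∧ IsForbiddenPath Q m p ∧
  (∀ b : Q.A, Q.tgt b = Q.src (p 0) → ¬ Q.rel b (p 0)) ∧
  (∀ b : Q.A, Q.src b = Q.tgt (p (m - 1)) → ¬ Q.rel (p (m - 1)) b)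

/-- A trivial forbidden thread at a vertex `v` (of length `0`). -/
def IsTrivialForbiddenThread (Q : GentleData) (v : Q.V) : Prop :=
  ({a : Q.A | Q.tgt a = v} = ∅) ∨ ({a : Q.A | Q.src a = v} = ∅) ∨
  (∃ b b' : Q.A, {a : Q.A | Q.tgt a = v} = {b} ∧ {a : Q.A | Q.src a = v} = {b'} ∧ ¬ Q.rel b b')

/-- The set of lengths of the forbidden threads of finite length. -/
def finiteForbiddenThreadLengths (Q : GentleData) : Set ℕ∞ :=
  {n : ℕ∞ | (n = 0 ∧ ∃ v : Q.V, IsTrivialForbiddenThread Q v) ∨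
    (∃ m : ℕ, n = (m : ℕ∞) ∧ ∃ p : ℕ → Q.A, IsForbiddenThread Q m p)}

/-- The set of lengths of all forbidden threads; an oriented cycle with full
relations gives rise to a forbidden thread of infinite length. -/
def forbiddenThreadLengths (Q : GentleData) : Set ℕ∞ :=
  finiteForbiddenThreadLengths Q ∪
    {n : ℕ∞ | n = ⊤ ∧ ∃ ℓ : ℕ, 1 ≤ ℓ ∧ ∃ c : ZMod ℓ → Q.A, IsOCFCycle Q c}

section Dimensions

/-- `projDimLE R n M` : the `R`-module `M` admits a projective resolution of
length at most `n`. -/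
def projDimLE (R : Type) [Ring R] (n : ℕ) (M : Type) [AddCommGroup M] [Module R M] : Prop :=
  ∃ (P : ℕ → ModuleCat.{0} R) (d : ∀ i : ℕ, ↥(P (i + 1)) →ₗ[R] ↥(P i)) (ε : ↥(P 0) →ₗ[R] M),
    (∀ i, Module.Projective R ↥(P i)) ∧
    Function.Surjective ε ∧ Function.Exact (d 0) ε ∧
    (∀ i, Function.Exact (d (i + 1)) (d i)) ∧
    (∀ i, n ≤ i → Subsingleton ↥(P (i + 1)))

/-- `injDimLE R n M` : the `R`-module `M` admits an injective coresolution of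
length at most `n`. -/
def injDimLE (R : Type) [Ring R] (n : ℕ) (M : Type) [AddCommGroup M] [Module R M] : Prop :=
  ∃ (E : ℕ → ModuleCat.{0} R) (d : ∀ i : ℕ, ↥(E i) →ₗ[R] ↥(E (i + 1))) (ι : M →ₗ[R] ↥(E 0)),
    (∀ i, Module.Injective R ↥(E i)) ∧
    Function.Injective ι ∧ Function.Exact ι (d 0) ∧
    (∀ i, Function.Exact (d i) (d (i + 1))) ∧
    (∀ i, n ≤ i → Subsingleton ↥(E (i + 1)))

/-- The projective dimension of a module, in `ℕ∞`. -/
noncomputable def projDim (R : Type) [Ring R] (M : Type) [AddCommGroup M] [Module R M] : ℕ∞ :=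
  sInf {n : ℕ∞ | ∃ m : ℕ, n = (m : ℕ∞) ∧ projDimLE R m M}

/-- The injective dimension of a module, in `ℕ∞`. -/
noncomputable def injDim (R : Type) [Ring R] (M : Type) [AddCommGroup M] [Module R M] : ℕ∞ :=
  sInf {n : ℕ∞ | ∃ m : ℕ, n = (m : ℕ∞) ∧ injDimLE R m M}

/-- The global dimension of a ring: the supremum of the projective dimensions
of all finitely generated modules. -/
noncomputable def globalDim (R : Type) [Ring R] : ℕ∞ :=
  ⨆ (M : ModuleCat.{0} R) (_ : Module.Finite R ↥M), projDim R ↥M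

/-- The left self-injective dimension: the injective dimension of `R` as a
left module over itself. -/
noncomputable def leftSelfInjDim (R : Type) [Ring R] : ℕ∞ := injDim R R

/-- The right self-injective dimension: the injective dimension of `R` as a
right module over itself. -/
noncomputable def rightSelfInjDim (R : Type) [Ring R] : ℕ∞ := injDim Rᵐᵒᵖ R

end Dimensions

section Radical

/-- The radical of a module: the intersection of its maximal submodules. -/
def radMod (R : Type) [Ring R] (M : Type) [AddCommGroup M] [Module R M] : Submodule R M :=
  sInf {N : Submodule R M | IsCoatom N}

/-- The top of a module: the quotient by its radical. -/
abbrev topMod (R : Type) [Ring R] (M : Type) [AddCommGroup M] [Module R M] : Type :=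
  M ⧸ radMod R M

/-- The socle of a module: the sum of its simple submodules. -/
def socMod (R : Type) [Ring R] (M : Type) [AddCommGroup M] [Module R M] : Submodule R M :=
  sSup {N : Submodule R M | IsAtom N}

/-- The simple right `A`-module `S(v)` at a vertex `v`, realized as the top of
the indecomposable projective `e_v A`. -/
noncomputable abbrev SimpleAt (k : Type) [Field k] (Q : GentleData) (v : Q.V) : Type :=
  topMod (GentleAlgebra k Q)ᵐᵒᵖ ↥(vertexModule k Q v)

end Radical

section Gorenstein

/-- An indecomposable module: nontrivial, and admitting no nontrivial direct
sum decomposition. -/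
def IndecomposableModule (R : Type) [Ring R] (M : Type) [AddCommGroup M] [Module R M] : Prop :=
  Nontrivial M ∧ ∀ N N' : Submodule R M, IsCompl N N' → N = ⊥ ∨ N' = ⊥

/-- A Gorenstein projective module: a syzygy of an acyclic complex of
projective modules which remains acyclic after applying `Hom(−, R)`. -/
def IsGorensteinProjective (R : Type) [Ring R] (G : Type) [AddCommGroup G] [Module R G] :
    Prop :=
  ∃ (P : ℤ → ModuleCat.{0} R) (d : ∀ n : ℤ, ↥(P n) →ₗ[R] ↥(P (n + 1))),
    (∀ n, Module.Projective R ↥(P n)) ∧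
    (∀ n, Function.Exact (d n) (d (n + 1))) ∧
    (∀ n : ℤ, Function.Exact
      (fun g : ↥(P (n + 1 + 1)) →ₗ[R] R => g ∘ₗ d (n + 1))
      (fun g : ↥(P (n + 1)) →ₗ[R] R => g ∘ₗ d n)) ∧
    Nonempty (G ≃ₗ[R] ↥(LinearMap.range (d (-1))))

/-- An indecomposable non-projective Gorenstein projective module. -/
def IsIndecNonProjGP (R : Type) [Ring R] (M : Type) [AddCommGroup M] [Module R M] : Prop :=
  IndecomposableModule R M ∧ IsGorensteinProjective R M ∧ ¬ Module.Projective R M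

/-- An indecomposable Gorenstein projective module. -/
def IsIndecGP (R : Type) [Ring R] (M : Type) [AddCommGroup M] [Module R M] : Prop :=
  IndecomposableModule R M ∧ IsGorensteinProjective R M

/-- Indecomposable non-projective Gorenstein projective right `A`-modules
(realized as right submodules of `A`), up to isomorphism. -/
noncomputable def npgpSetoid (k : Type) [Field k] (Q : GentleData) :
    Setoid {N : Submodule (GentleAlgebra k Q)ᵐᵒᵖ (GentleAlgebra k Q) //
      IsIndecNonProjGP (GentleAlgebra k Q)ᵐᵒᵖ ↥N} where
  r N N' := Nonempty (↥N.1 ≃ₗ[(GentleAlgebra k Q)ᵐᵒᵖ] ↥N'.1)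
  iseqv := ⟨fun _ => ⟨LinearEquiv.refl _ _⟩, fun ⟨e⟩ => ⟨e.symm⟩, fun ⟨e⟩ ⟨f⟩ => ⟨e.trans f⟩⟩

/-- The number of isomorphism classes of indecomposable non-projective
Gorenstein projective right `A`-modules. -/
noncomputable def numIndecNonProjGP (k : Type) [Field k] (Q : GentleData) : ℕ :=
  Nat.card (Quotient (npgpSetoid k Q))

/-- Indecomposable Gorenstein projective right `A`-modules (realized as right
submodules of `A`), up to isomorphism. -/
noncomputable def gpSetoid (k : Type) [Field k] (Q : GentleData) :
    Setoid {N : Submodule (GentleAlgebra k Q)ᵐᵒᵖ (GentleAlgebra k Q) //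
      IsIndecGP (GentleAlgebra k Q)ᵐᵒᵖ ↥N} where
  r N N' := Nonempty (↥N.1 ≃ₗ[(GentleAlgebra k Q)ᵐᵒᵖ] ↥N'.1)
  iseqv := ⟨fun _ => ⟨LinearEquiv.refl _ _⟩, fun ⟨e⟩ => ⟨e.symm⟩, fun ⟨e⟩ ⟨f⟩ => ⟨e.trans f⟩⟩

end Gorenstein

section Strings

/-- A walk in the quiver: `len` letters, the `i`-th letter (for `1 ≤ i ≤ len`)
joining the vertex `vtx (i-1)` to `vtx i`; a letter `(a, true)` is the arrow
`a` read forwards (direct), and `(a, false)` is its formal inverse. -/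
structure StrWalk (Q : GentleData) : Type where
  len : ℕ
  vtx : ℕ → Q.V
  letter : ℕ → Q.A × Bool

/-- The walk is a string: letters join consecutive vertices, the walk is
reduced (no `a a⁻` nor `a⁻ a`), and it avoids the relations. -/
def IsString (Q : GentleData) (w : StrWalk Q) : Prop :=
  (∀ i : ℕ, 1 ≤ i → i ≤ w.len →
    ((w.letter i).2 = true →
      Q.src (w.letter i).1 = w.vtx (i - 1) ∧ Q.tgt (w.letter i).1 = w.vtx i) ∧
    ((w.letter i).2 = false →
      Q.tgt (w.letter i).1 = w.vtx (i - 1) ∧ Q.src (w.letter i).1 = w.vtx i)) ∧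
  (∀ i : ℕ, 1 ≤ i → i + 1 ≤ w.len →
    (¬ ((w.letter i).1 = (w.letter (i + 1)).1 ∧ (w.letter i).2 ≠ (w.letter (i + 1)).2)) ∧
    ((w.letter i).2 = true → (w.letter (i + 1)).2 = true →
      ¬ Q.rel (w.letter i).1 (w.letter (i + 1)).1) ∧
    ((w.letter i).2 = false → (w.letter (i + 1)).2 = false →
      ¬ Q.rel (w.letter (i + 1)).1 (w.letter i).1))

/-- `M` is the string module `M(w)` of the string `w`: it has a `k`-basis
indexed by the vertices `0, …, len` of the walk, the idempotent of a vertex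
fixes exactly the basis vectors sitting at that vertex, and an arrow moves
basis vectors along the corresponding letters of the walk. -/
def IsStringModule (k : Type) [Field k] (Q : GentleData) (w : StrWalk Q) (M : Type)
    [AddCommGroup M] [Module k M] [Module (GentleAlgebra k Q)ᵐᵒᵖ M] : Prop :=
  (∀ (c : k) (m : M), (algebraMap k (GentleAlgebra k Q)ᵐᵒᵖ c) • m = c • m) ∧
  ∃ b : ℕ → M,
    LinearIndependent k (fun i : Fin (w.len + 1) => b i) ∧
    Submodule.span k (b '' {i : ℕ | i ≤ w.len}) = ⊤ ∧
    (∀ i : ℕ, i ≤ w.len → ∀ v : Q.V,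
      (op (idemOf k Q v)) • b i = if w.vtx i = v then b i else 0) ∧
    (∀ i : ℕ, i ≤ w.len → ∀ a : Q.A,
      (op (arrOf k Q a)) • b i =
        (if i + 1 ≤ w.len ∧ w.letter (i + 1) = (a, true) then b (i + 1) else 0) +
        (if 1 ≤ i ∧ w.letter i = (a, false) then b (i - 1) else 0))

/-- The vertex at position `i` is a source of the walk: the adjacent letters
point away from it. -/
def sourceAt (Q : GentleData) (w : StrWalk Q) (i : ℕ) : Prop :=
  i ≤ w.len ∧ (i = 0 ∨ (w.letter i).2 = false) ∧ (i = w.len ∨ (w.letter (i + 1)).2 = true)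

/-- The vertex at position `i` is a sink of the walk: the adjacent letters
point towards it. -/
def sinkAt (Q : GentleData) (w : StrWalk Q) (i : ℕ) : Prop :=
  i ≤ w.len ∧ (i = 0 ∨ (w.letter i).2 = true) ∧ (i = w.len ∨ (w.letter (i + 1)).2 = false)

/-- Left maximality of the inverse prefix (letters `1, …, i`) of a walk of the
shape "inverse prefix followed by direct suffix": the underlying direct path
out of the vertex at position `i` cannot be prolonged (and, when the prefix is
trivial, no second arrow leaves the starting vertex). -/
def LeftMaxAt (Q : GentleData) (w : StrWalk Q) (i : ℕ) : Prop :=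
  if 1 ≤ i then ∀ α : Q.A, Q.src α = w.vtx 0 → Q.rel (w.letter 1).1 α
  else ∀ α : Q.A, Q.src α = w.vtx 0 → (1 ≤ w.len ∧ α = (w.letter 1).1)

/-- Right maximality of the direct suffix (letters `i+1, …, len`) of a walk of
the shape "inverse prefix followed by direct suffix". -/
def RightMaxAt (Q : GentleData) (w : StrWalk Q) (i : ℕ) : Prop :=
  if i < w.len then ∀ β : Q.A, Q.src β = w.vtx w.len → Q.rel (w.letter w.len).1 β
  else ∀ β : Q.A, Q.src β = w.vtx w.len → (1 ≤ w.len ∧ β = (w.letter w.len).1)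

end Strings

/-!
Write `A = kQ/I`. Extensions of the simple modules by arbitrary ones, built from the generators and
relations of `A` in the manner of Fox calculus, show that the first syzygy of the left ideal `A·a`
is the direct sum of the `A·b` over the arrows `b` with `ba ∈ I`. Hence the projective dimension of
`A·a` is the maximal number of arrows preceding `a` on a forbidden path. For arrows `a` ending at
`v`, the sum of the `A·a` is direct in `A·e_v`; all these arrows give the simple module at `v` as
the quotient, and a single one gives a module of projective dimension `pd(A·a) + 1`. So `gl.dim A`
is the maximal length of a forbidden path. This number does not change when all arrows are
reversed, so `A` and its opposite have the same global dimension.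

Over a Noetherian ring `R` of finite global dimension, finite free resolutions bound the injective
dimension of every finitely generated module by `inj.dim R`, and the projective dimension of a
finitely generated module is detected by `Ext` into finitely generated modules. Hence
`gl.dim R ≤ inj.dim R`, and the reverse inequality follows from Baer's criterion.
-/

section HomologicalDimension

open CategoryTheory Abelian

lemma sInf_natCast_le_iff {p : ℕ → Prop} {d : ℕ} :
    sInf {n : ℕ∞ | ∃ m : ℕ, n = m ∧ p m} ≤ d ↔ ∃ m ≤ d, p m := by
  refine ⟨fun h ↦ ?_, fun ⟨m, hmd, hm⟩ ↦ sInf_le_of_le ⟨m, rfl, hm⟩ (Nat.cast_le.2 hmd)⟩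
  have hne : {n : ℕ∞ | ∃ m : ℕ, n = m ∧ p m}.Nonempty := by
    by_contra hempty
    simp [Set.not_nonempty_iff_eq_empty.1 hempty] at h
  obtain ⟨m, hm, hpm⟩ := csInf_mem hne
  exact ⟨m, by exact_mod_cast hm ▸ h, hpm⟩

variable {R : Type} [Ring R] {M N F : Type} [AddCommGroup M] [Module R M]
  [AddCommGroup N] [Module R N] [AddCommGroup F] [Module R F]

lemma hasProjectiveDimensionLT_one_iff :
    HasProjectiveDimensionLT (ModuleCat.of R M) 1 ↔ Module.Projective R M := by
  rw [← projective_iff_hasProjectiveDimensionLT_one, IsProjective.iff_projective]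

lemma hasInjectiveDimensionLT_one_iff :
    HasInjectiveDimensionLT (ModuleCat.of R M) 1 ↔ Module.Injective R M := by
  rw [← injective_iff_hasInjectiveDimensionLT_one, Module.injective_iff_injective_object]

lemma hasProjectiveDimensionLT_ker_iff [Module.Projective R F] {f : F →ₗ[R] M}
    (hf : Function.Surjective f) (n : ℕ) :
    HasProjectiveDimensionLT (ModuleCat.of R (LinearMap.ker f)) (n + 1) ↔
      HasProjectiveDimensionLT (ModuleCat.of R M) (n + 2) :=
  ((LinearMap.shortExact_shortComplexKer hf).hasProjectiveDimensionLT_X₃_iff n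
    ((IsProjective.iff_projective F).1 ‹_›)).symm

lemma shortExact_of_injective {f : M →ₗ[R] F} (hf : Function.Injective f) :
    (ModuleCat.shortComplexOfCompEqZero f (LinearMap.range f).mkQ
      (LinearMap.range_mkQ_comp f)).ShortExact :=
  ModuleCat.shortComplex_shortExact _ (LinearMap.exact_map_mkQ_range f) hf
    (Submodule.mkQ_surjective _)

lemma hasInjectiveDimensionLT_coker_iff [Module.Injective R F] {f : M →ₗ[R] F}
    (hf : Function.Injective f) (n : ℕ) :
    HasInjectiveDimensionLT (ModuleCat.of R (F ⧸ LinearMap.range f)) (n + 1) ↔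
      HasInjectiveDimensionLT (ModuleCat.of R M) (n + 2) :=
  (shortExact_of_injective hf).hasInjectiveDimensionLT_X₃_iff n
    ((Module.injective_iff_injective_object R F).1 ‹_›)

lemma projDimLE_zero_iff : projDimLE R 0 M ↔ Module.Projective R M := by
  constructor
  · rintro ⟨P, d, ε, hP, hε, h0, -, hn⟩
    have hinj : Function.Injective ε := by
      rw [injective_iff_map_eq_zero]
      intro x hx
      obtain ⟨y, rfl⟩ := (h0 x).1 hx
      have := hn 0 le_rfl
      rw [Subsingleton.elim y 0, map_zero]
    have := hP 0
    exact Module.Projective.of_equiv (LinearEquiv.ofBijective ε ⟨hinj, hε⟩)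
  · intro hM
    refine ⟨fun i ↦ Nat.casesOn i (ModuleCat.of R M) fun _ ↦ ModuleCat.of R PUnit,
      fun _ ↦ 0, LinearMap.id, ?_, Function.surjective_id, fun x ↦ by simp [eq_comm], ?_, ?_⟩
    · rintro (_ | i)
      exacts [hM, inferInstanceAs (Module.Projective R PUnit)]
    · exact fun i x ↦ iff_of_true rfl ⟨0, Subsingleton.elim (α := PUnit) _ _⟩
    · exact fun i _ ↦ inferInstanceAs (Subsingleton PUnit)

lemma projDimLE_succ_iff {n : ℕ} :
    projDimLE R (n + 1) M ↔ ∃ (F : ModuleCat.{0} R) (f : F →ₗ[R] M),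
      Module.Projective R F ∧ Function.Surjective f ∧ projDimLE R n (LinearMap.ker f) := by
  constructor
  · rintro ⟨P, d, ε, hP, hε, h0, hd, hn⟩
    refine ⟨P 0, ε, hP 0, hε, fun i ↦ P (i + 1), fun i ↦ d (i + 1),
      (d 0).codRestrict _ fun y ↦ (h0 _).2 ⟨y, rfl⟩, fun i ↦ hP _, ?_, ?_, fun i ↦ hd _,
      fun i hi ↦ hn _ (by omega)⟩
    · rintro ⟨x, hx⟩
      obtain ⟨y, hy⟩ := (h0 x).1 hx
      exact ⟨y, Subtype.ext hy⟩
    · exact fun x ↦ Subtype.ext_iff.trans (hd 0 x)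
  · rintro ⟨F, f, hF, hf, P, d, ε, hP, hε, h0, hd, hn⟩
    refine ⟨fun i ↦ Nat.casesOn i F P,
      fun i ↦ Nat.casesOn i ((LinearMap.ker f).subtype ∘ₗ ε) d, f, ?_, hf, ?_, ?_, ?_⟩
    · rintro (_ | i)
      exacts [hF, hP i]
    · refine fun x ↦ ⟨fun hx ↦ ?_, ?_⟩
      · obtain ⟨y, hy⟩ := hε ⟨x, hx⟩
        exact ⟨y, congrArg Subtype.val hy⟩
      · rintro ⟨y, rfl⟩
        exact (ε y).2
    · rintro (_ | i)
      exacts [fun x ↦ Subtype.ext_iff.symm.trans (h0 x), hd i]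
    · rintro (_ | i) hi
      exacts [absurd hi (by omega), hn i (by omega)]

lemma injDimLE_zero_iff : injDimLE R 0 M ↔ Module.Injective R M := by
  constructor
  · rintro ⟨E, d, ι, hE, hι, h0, -, hn⟩
    have hsurj : Function.Surjective ι := fun x ↦
      (h0 x).1 <| by have := hn 0 le_rfl; exact Subsingleton.elim _ _
    exact (Module.Baer.of_equiv (LinearEquiv.ofBijective ι ⟨hι, hsurj⟩).symm
      (Module.Baer.of_injective (hE 0))).injective
  · intro hM
    refine ⟨fun i ↦ Nat.casesOn i (ModuleCat.of R M) fun _ ↦ ModuleCat.of R PUnit,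
      fun _ ↦ 0, LinearMap.id, ?_, Function.injective_id, fun x ↦ by simp, ?_, ?_⟩
    · rintro (_ | i)
      exacts [hM, ⟨fun _ _ _ _ _ _ _ _ _ ↦ ⟨0, fun _ ↦ rfl⟩⟩]
    · exact fun i x ↦ iff_of_true rfl ⟨0, Subsingleton.elim (α := PUnit) _ _⟩
    · exact fun i _ ↦ inferInstanceAs (Subsingleton PUnit)

lemma injDimLE_succ_iff {n : ℕ} :
    injDimLE R (n + 1) M ↔ ∃ (E : ModuleCat.{0} R) (f : M →ₗ[R] E),
      Module.Injective R E ∧ Function.Injective f ∧ injDimLE R n (E ⧸ LinearMap.range f) := by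
  constructor
  · rintro ⟨E, d, ι, hE, hι, h0, hd, hn⟩
    have hker : LinearMap.ker (d 0) = LinearMap.range ι := LinearMap.exact_iff.1 h0
    refine ⟨E 0, ι, hE 0, hι, fun i ↦ E (i + 1), fun i ↦ d (i + 1),
      (LinearMap.range ι).liftQ (d 0) hker.ge, fun i ↦ hE _, ?_, ?_, fun i ↦ hd _,
      fun i hi ↦ hn _ (by omega)⟩
    · exact LinearMap.ker_eq_bot.1 (Submodule.ker_liftQ_eq_bot' _ _ hker.symm)
    · rw [LinearMap.exact_iff, Submodule.range_liftQ]
      exact LinearMap.exact_iff.1 (hd 0)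
  · rintro ⟨F, f, hF, hf, E, d, ι, hE, hι, h0, hd, hn⟩
    refine ⟨fun i ↦ Nat.casesOn i F E,
      fun i ↦ Nat.casesOn i (ι ∘ₗ (LinearMap.range f).mkQ) d, f, ?_, hf, ?_, ?_, ?_⟩
    · rintro (_ | i)
      exacts [hF, hE i]
    · refine LinearMap.exact_iff.2 ?_
      change LinearMap.ker (ι ∘ₗ (LinearMap.range f).mkQ) = _
      rw [LinearMap.ker_comp_of_ker_eq_bot _ (LinearMap.ker_eq_bot.2 hι), Submodule.ker_mkQ]
    · rintro (_ | i)
      · refine LinearMap.exact_iff.2 ?_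
        change LinearMap.ker (d 0) = LinearMap.range (ι ∘ₗ (LinearMap.range f).mkQ)
        rw [LinearMap.range_comp_of_range_eq_top _ (Submodule.range_mkQ _),
          LinearMap.exact_iff.1 h0]
      · exact hd i
    · rintro (_ | i) hi
      exacts [absurd hi (by omega), hn i (by omega)]

theorem projDimLE_iff_hasProjectiveDimensionLT {n : ℕ} :
    projDimLE R n M ↔ HasProjectiveDimensionLT (ModuleCat.of R M) (n + 1) := by
  induction n generalizing M with
  | zero => rw [projDimLE_zero_iff, hasProjectiveDimensionLT_one_iff]
  | succ n ih =>
    rw [projDimLE_succ_iff]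
    constructor
    · rintro ⟨F, f, hF, hf, hker⟩
      exact (hasProjectiveDimensionLT_ker_iff hf n).1 (ih.1 hker)
    · intro h
      have hf := Finsupp.linearCombination_id_surjective R M
      exact ⟨ModuleCat.of R (M →₀ R), _, inferInstanceAs (Module.Projective R (M →₀ R)), hf,
        ih.2 ((hasProjectiveDimensionLT_ker_iff hf n).2 h)⟩

theorem injDimLE_iff_hasInjectiveDimensionLT {n : ℕ} :
    injDimLE R n M ↔ HasInjectiveDimensionLT (ModuleCat.of R M) (n + 1) := by
  induction n generalizing M with
  | zero => rw [injDimLE_zero_iff, hasInjectiveDimensionLT_one_iff]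
  | succ n ih =>
    rw [injDimLE_succ_iff]
    constructor
    · rintro ⟨E, f, hE, hf, hcoker⟩
      exact (hasInjectiveDimensionLT_coker_iff hf n).1 (ih.1 hcoker)
    · intro h
      obtain ⟨⟨E, hE, f, hf⟩⟩ := EnoughInjectives.presentation (ModuleCat.of R M)
      have hE' : Module.Injective R E := (Module.injective_iff_injective_object R E).2 hE
      have hf' : Function.Injective f.hom := (ModuleCat.mono_iff_injective _).1 hf
      exact ⟨E, f.hom, hE', hf', ih.2 ((hasInjectiveDimensionLT_coker_iff hf' n).2 h)⟩

lemma projDim_le_iff {d : ℕ} :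
    projDim R M ≤ d ↔ HasProjectiveDimensionLT (ModuleCat.of R M) (d + 1) := by
  simp only [projDim, sInf_natCast_le_iff, projDimLE_iff_hasProjectiveDimensionLT]
  exact ⟨fun ⟨m, hm, h⟩ ↦ hasProjectiveDimensionLT_of_ge _ (m + 1) _ (by omega),
    fun h ↦ ⟨d, le_rfl, h⟩⟩

lemma injDim_le_iff {d : ℕ} :
    injDim R M ≤ d ↔ HasInjectiveDimensionLT (ModuleCat.of R M) (d + 1) := by
  simp only [injDim, sInf_natCast_le_iff, injDimLE_iff_hasInjectiveDimensionLT]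
  exact ⟨fun ⟨m, hm, h⟩ ↦ hasInjectiveDimensionLT_of_ge _ (m + 1) _ (by omega),
    fun h ↦ ⟨d, le_rfl, h⟩⟩

lemma globalDim_le_iff {d : ℕ} :
    globalDim R ≤ d ↔ ∀ M : ModuleCat.{0} R, Module.Finite R M →
      HasProjectiveDimensionLT M (d + 1) := by
  simp only [globalDim, iSup_le_iff, projDim_le_iff]

lemma exists_extension_of_subsingleton_ext_one {f : F →ₗ[R] M} (hf : Function.Surjective f)
    (h : Subsingleton (Ext (ModuleCat.of R M) (ModuleCat.of R N) 1))
    (g : LinearMap.ker f →ₗ[R] N) : ∃ g' : F →ₗ[R] N, g' ∘ₗ (LinearMap.ker f).subtype = g := by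
  obtain ⟨φ, hφ⟩ := Ext.contravariant_sequence_exact₁ (LinearMap.shortExact_shortComplexKer hf)
    (ModuleCat.of R N) (Ext.mk₀ (ModuleCat.ofHom g)) (add_zero 1) (Subsingleton.elim _ _)
  obtain ⟨φ, rfl⟩ := Ext.homEquiv₀.symm.surjective φ
  have hφg : ModuleCat.ofHom (LinearMap.ker f).subtype ≫ φ = ModuleCat.ofHom g :=
    Ext.homEquiv₀.symm.injective (by simpa using hφ)
  exact ⟨φ.hom, congrArg ModuleCat.Hom.hom hφg⟩

lemma subsingleton_ext_ker [Module.Projective R F] {f : F →ₗ[R] M} (hf : Function.Surjective f)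
    {n : ℕ} (h : Subsingleton (Ext (ModuleCat.of R M) (ModuleCat.of R N) (n + 2))) :
    Subsingleton (Ext (ModuleCat.of R (LinearMap.ker f)) (ModuleCat.of R N) (n + 1)) := by
  have hF : Projective (ModuleCat.of R F) := (IsProjective.iff_projective _).1 ‹_›
  refine subsingleton_of_forall_eq 0 fun x ↦ ?_
  obtain ⟨φ, rfl⟩ := Ext.contravariant_sequence_exact₁ (LinearMap.shortExact_shortComplexKer hf)
    (ModuleCat.of R N) x (n₁ := n + 2) (by omega) (Subsingleton.elim _ _)
  rw [show φ = 0 from Ext.eq_zero_of_projective (P := ModuleCat.of R F) φ, Ext.comp_zero]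

lemma subsingleton_ext_coker [Module.Injective R F] {f : M →ₗ[R] F} (hf : Function.Injective f)
    {n : ℕ} (h : Subsingleton (Ext (ModuleCat.of R N) (ModuleCat.of R M) (n + 2))) :
    Subsingleton (Ext (ModuleCat.of R N) (ModuleCat.of R (F ⧸ LinearMap.range f)) (n + 1)) := by
  have hF : Injective (ModuleCat.of R F) := (Module.injective_iff_injective_object R F).1 ‹_›
  refine subsingleton_of_forall_eq 0 fun x ↦ ?_
  obtain ⟨φ, rfl⟩ := Ext.covariant_sequence_exact₃ _ (shortExact_of_injective hf) x rfl
    (Subsingleton.elim _ _)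
  rw [show φ = 0 from Ext.eq_zero_of_injective (I := ModuleCat.of R F) φ, Ext.zero_comp]

theorem hasInjectiveDimensionLT_of_subsingleton_ext_quotient {n : ℕ}
    (h : ∀ I : Ideal R, Subsingleton (Ext (ModuleCat.of R (R ⧸ I)) (ModuleCat.of R M) (n + 1))) :
    HasInjectiveDimensionLT (ModuleCat.of R M) (n + 1) := by
  induction n generalizing M with
  | zero =>
    refine hasInjectiveDimensionLT_one_iff.2 (Module.Baer.injective fun I g ↦ ?_)
    have hker : LinearMap.ker I.mkQ = I := Submodule.ker_mkQ I
    obtain ⟨g', hg'⟩ := exists_extension_of_subsingleton_ext_one (Submodule.mkQ_surjective I)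
      (h I) (g ∘ₗ (LinearEquiv.ofEq _ _ hker).toLinearMap)
    exact ⟨g', fun x hx ↦ LinearMap.congr_fun hg' ⟨x, hker.ge hx⟩⟩
  | succ n ih =>
    obtain ⟨⟨E, hE, f, hf⟩⟩ := EnoughInjectives.presentation (ModuleCat.of R M)
    have hE' : Module.Injective R E := (Module.injective_iff_injective_object R E).2 hE
    have hf' : Function.Injective f.hom := (ModuleCat.mono_iff_injective _).1 hf
    exact (hasInjectiveDimensionLT_coker_iff hf' n).1
      (ih fun I ↦ subsingleton_ext_coker hf' (h I))

theorem hasProjectiveDimensionLT_of_subsingleton_ext_finite [IsNoetherianRing R]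
    [Module.Finite R M] {n : ℕ}
    (h : ∀ (L : Type) [AddCommGroup L] [Module R L], Module.Finite R L →
      Subsingleton (Ext (ModuleCat.of R M) (ModuleCat.of R L) (n + 1))) :
    HasProjectiveDimensionLT (ModuleCat.of R M) (n + 1) := by
  obtain ⟨r, f, hf⟩ := Module.Finite.exists_fin' R M
  induction n generalizing M r with
  | zero =>
    -- A retraction onto the first syzygy exhibits `M` as a direct summand of `Rʳ`.
    obtain ⟨g, hg⟩ := exists_extension_of_subsingleton_ext_one hf (h _ inferInstance)
      LinearMap.id
    have hsplit : (∃ s, f ∘ₗ s = LinearMap.id) ↔ ∃ l, l ∘ₗ (LinearMap.ker f).subtype = .id :=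
      ((LinearMap.exact_subtype_ker_map f).split_tfae (LinearMap.ker f).subtype_injective hf).out
        0 1
    obtain ⟨s, hs⟩ := hsplit.2 ⟨g, hg⟩
    exact hasProjectiveDimensionLT_one_iff.2 (Module.Projective.of_split s f hs)
  | succ n ih =>
    obtain ⟨s, g, hg⟩ := Module.Finite.exists_fin' R (LinearMap.ker f)
    exact (hasProjectiveDimensionLT_ker_iff hf n).1
      (ih (fun L _ _ hL ↦ subsingleton_ext_ker hf (h L hL)) s g hg)

lemma shortExact_inl_snd :
    (ModuleCat.shortComplexOfCompEqZero (.inl R M N) (.snd R M N)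
      (LinearMap.snd_comp_inl R M N)).ShortExact :=
  ModuleCat.shortComplex_shortExact _ Function.Exact.inl_snd LinearMap.inl_injective
    LinearMap.snd_surjective

lemma hasInjectiveDimensionLT_prod {n : ℕ} (hM : HasInjectiveDimensionLT (ModuleCat.of R M) n)
    (hN : HasInjectiveDimensionLT (ModuleCat.of R N) n) :
    HasInjectiveDimensionLT (ModuleCat.of R (M × N)) n :=
  shortExact_inl_snd.hasInjectiveDimensionLT_X₂ n hM hN

lemma hasInjectiveDimensionLT_fin_fun {n : ℕ} (hM : HasInjectiveDimensionLT (ModuleCat.of R M) n)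
    (r : ℕ) : HasInjectiveDimensionLT (ModuleCat.of R (Fin r → M)) n := by
  induction r with
  | zero =>
    have := ((ModuleCat.isZero_of_iff_subsingleton (R := R) (M := Fin 0 → M)).2
      inferInstance).hasInjectiveDimensionLT_zero
    exact hasInjectiveDimensionLT_of_ge _ 0 n n.zero_le
  | succ r ih =>
    have := hasInjectiveDimensionLT_prod hM ih
    exact hasInjectiveDimensionLT_of_iso
      (Fin.consLinearEquiv R fun _ : Fin (r + 1) ↦ M).toModuleIso n

theorem hasInjectiveDimensionLT_of_finite [IsNoetherianRing R] {m d : ℕ}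
    (hR : HasInjectiveDimensionLT (ModuleCat.of R R) (m + 1)) [Module.Finite R M]
    (hM : HasProjectiveDimensionLT (ModuleCat.of R M) (d + 1)) :
    HasInjectiveDimensionLT (ModuleCat.of R M) (m + 1) := by
  obtain ⟨r, f, hf⟩ := Module.Finite.exists_fin' R M
  have hfree := hasInjectiveDimensionLT_fin_fun hR r
  induction d generalizing M r with
  | zero =>
    have hproj := hasProjectiveDimensionLT_one_iff.1 hM
    obtain ⟨s, hs⟩ := Module.projective_lifting_property f LinearMap.id hf
    exact Retract.hasInjectiveDimensionLT (Y := ModuleCat.of R (Fin r → R))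
      ⟨ModuleCat.ofHom s, ModuleCat.ofHom f, ModuleCat.hom_ext hs⟩ _
  | succ d ih =>
    obtain ⟨s, g, hg⟩ := Module.Finite.exists_fin' R (LinearMap.ker f)
    have hker := ih ((hasProjectiveDimensionLT_ker_iff hf d).2 hM) s g hg
      (hasInjectiveDimensionLT_fin_fun hR s)
    exact (LinearMap.shortExact_shortComplexKer hf).hasInjectiveDimensionLT_X₃ (m + 1) hfree
      (hasInjectiveDimensionLT_of_ge _ (m + 1) _ (Nat.le_succ _))

theorem injDim_le_globalDim : injDim R M ≤ globalDim R := by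
  induction h : globalDim R with
  | top => exact le_top
  | coe d =>
    refine injDim_le_iff.2 (hasInjectiveDimensionLT_of_subsingleton_ext_quotient fun I ↦ ?_)
    have := globalDim_le_iff.1 h.le (ModuleCat.of R (R ⧸ I)) inferInstance
    exact HasProjectiveDimensionLT.subsingleton _ (d + 1) _ le_rfl _

theorem globalDim_le_injDim_self [IsNoetherianRing R] (h : globalDim R ≠ ⊤) :
    globalDim R ≤ injDim R R := by
  obtain ⟨d, hd⟩ := ENat.ne_top_iff_exists.1 h
  induction hm : injDim R R with
  | top => exact le_top
  | coe m =>
    have hR := injDim_le_iff.1 hm.le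
    refine globalDim_le_iff.2 fun M _ ↦
      hasProjectiveDimensionLT_of_subsingleton_ext_finite (M := M) fun L _ _ _ ↦ ?_
    have := hasInjectiveDimensionLT_of_finite hR
      (globalDim_le_iff.1 hd.ge (ModuleCat.of R L) ‹_›)
    exact HasInjectiveDimensionLT.subsingleton _ (m + 1) _ le_rfl _

theorem injDim_self_eq_globalDim [IsNoetherianRing R] (h : globalDim R ≠ ⊤) :
    injDim R R = globalDim R :=
  injDim_le_globalDim.antisymm (globalDim_le_injDim_self h)

lemma injDim_eq_of_linearEquiv (e : M ≃ₗ[R] N) : injDim R M = injDim R N :=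
  WithTop.eq_of_forall_le_coe_iff fun _ ↦ injDim_le_iff.trans <| .trans
    ⟨fun _ ↦ hasInjectiveDimensionLT_of_iso e.toModuleIso _,
      fun _ ↦ hasInjectiveDimensionLT_of_iso e.symm.toModuleIso _⟩ injDim_le_iff.symm

lemma injDim_mulOpposite_self : injDim Rᵐᵒᵖ R = injDim Rᵐᵒᵖ Rᵐᵒᵖ :=
  injDim_eq_of_linearEquiv (opLinearEquiv Rᵐᵒᵖ)

attribute [local instance] RingHomInvPair.of_ringEquiv in
lemma globalDim_le_of_ringEquiv {S : Type} [Ring S] (e : R ≃+* S) :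
    globalDim S ≤ globalDim R := by
  induction h : globalDim R with
  | top => exact le_top
  | coe d =>
    refine globalDim_le_iff.2 fun M _ ↦ ?_
    let M' := (ModuleCat.restrictScalars (e : R →+* S)).obj M
    let e' : M' ≃ₛₗ[(e : R →+* S)] M :=
      { AddEquiv.refl M with map_smul' := fun _ _ ↦ rfl }
    have : Module.Finite R M' :=
      (LinearMap.finite_iff_of_bijective e'.toLinearMap e'.bijective).2 ‹_›
    have := globalDim_le_iff.1 h.le M' this
    exact ModuleCat.hasProjectiveDimensionLE_of_semiLinearEquiv e e' d

lemma globalDim_eq_of_ringEquiv {S : Type} [Ring S] (e : R ≃+* S) :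
    globalDim R = globalDim S :=
  (globalDim_le_of_ringEquiv e.symm).antisymm (globalDim_le_of_ringEquiv e)

lemma hasProjectiveDimensionLT_zero_iff :
    HasProjectiveDimensionLT (ModuleCat.of R M) 0 ↔ Subsingleton M :=
  (hasProjectiveDimensionLT_zero_iff_isZero _).trans ModuleCat.isZero_of_iff_subsingleton

lemma hasProjectiveDimensionLT_iff_of_linearEquiv (e : M ≃ₗ[R] N) (n : ℕ) :
    HasProjectiveDimensionLT (ModuleCat.of R M) n ↔
      HasProjectiveDimensionLT (ModuleCat.of R N) n :=
  ⟨fun _ ↦ hasProjectiveDimensionLT_of_iso e.toModuleIso n,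
    fun _ ↦ hasProjectiveDimensionLT_of_iso e.symm.toModuleIso n⟩

lemma shortExact_mkQ (p : Submodule R M) :
    (ModuleCat.shortComplexOfCompEqZero p.subtype p.mkQ
      (LinearMap.ext fun x ↦ (Submodule.Quotient.mk_eq_zero p).2 x.2)).ShortExact :=
  ModuleCat.shortComplex_shortExact _ (LinearMap.exact_subtype_mkQ p) p.subtype_injective
    p.mkQ_surjective

lemma hasProjectiveDimensionLT_prod_iff (n : ℕ) :
    HasProjectiveDimensionLT (ModuleCat.of R (M × N)) n ↔
      HasProjectiveDimensionLT (ModuleCat.of R M) n ∧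
        HasProjectiveDimensionLT (ModuleCat.of R N) n := by
  constructor
  · intro h
    exact ⟨Retract.hasProjectiveDimensionLT (X := ModuleCat.of R M)
        ⟨ModuleCat.ofHom (.inl R M N), ModuleCat.ofHom (.fst R M N), rfl⟩ n,
      Retract.hasProjectiveDimensionLT (X := ModuleCat.of R N)
        ⟨ModuleCat.ofHom (.inr R M N), ModuleCat.ofHom (.snd R M N), rfl⟩ n⟩
  · rintro ⟨hM, hN⟩
    exact (shortExact_inl_snd (M := M) (N := N)).hasProjectiveDimensionLT_X₂ n hM hN

lemma hasProjectiveDimensionLT_sup_iff {p q : Submodule R M} (h : Disjoint p q) (n : ℕ) :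
    HasProjectiveDimensionLT (ModuleCat.of R ↥(p ⊔ q)) n ↔
      HasProjectiveDimensionLT (ModuleCat.of R p) n ∧
        HasProjectiveDimensionLT (ModuleCat.of R q) n := by
  have hinj : Function.Injective (p.subtype.coprod q.subtype) :=
    LinearMap.ker_eq_bot.1 (by
      rw [LinearMap.ker_coprod_of_disjoint_range _ _ (by simpa only [Submodule.range_subtype]),
        Submodule.ker_subtype, Submodule.ker_subtype, Submodule.prod_bot])
  have hrange : LinearMap.range (p.subtype.coprod q.subtype) = p ⊔ q := by
    rw [LinearMap.range_coprod, Submodule.range_subtype, Submodule.range_subtype]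
  rw [← hasProjectiveDimensionLT_prod_iff,
    hasProjectiveDimensionLT_iff_of_linearEquiv
      ((LinearEquiv.ofInjective _ hinj).trans (.ofEq _ _ hrange))]

lemma hasProjectiveDimensionLT_biSup_iff {ι : Type} {p : ι → Submodule R M} (hp : iSupIndep p)
    {T : Set ι} (hT : T.Finite) (n : ℕ) :
    HasProjectiveDimensionLT (ModuleCat.of R ↥(⨆ i ∈ T, p i)) n ↔
      ∀ i ∈ T, HasProjectiveDimensionLT (ModuleCat.of R (p i)) n := by
  induction T, hT using Set.Finite.induction_on with
  | empty =>
    have : HasProjectiveDimensionLT (ModuleCat.of R ↥(⨆ i ∈ (∅ : Set ι), p i)) 0 :=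
      hasProjectiveDimensionLT_zero_iff.2 (by rw [iSup_emptyset]; infer_instance)
    exact iff_of_true (hasProjectiveDimensionLT_of_ge _ 0 n n.zero_le) (by simp)
  | @insert i T hi hT ih =>
    rw [iSup_insert, hasProjectiveDimensionLT_sup_iff (hp.disjoint_biSup hi), ih,
      Set.forall_mem_insert]

lemma projective_quotient_iff {I : Ideal R} :
    Module.Projective R (R ⧸ I) ↔ ∃ w ∈ I, ∀ x ∈ I, x * w = x := by
  constructor
  · intro _
    obtain ⟨s, hs⟩ := Module.projective_lifting_property I.mkQ LinearMap.id I.mkQ_surjective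
    refine ⟨1 - s (I.mkQ 1), ?_, fun x hx ↦ ?_⟩
    · rw [← Submodule.Quotient.mk_eq_zero I, ← Submodule.mkQ_apply, map_sub, sub_eq_zero]
      exact (LinearMap.congr_fun hs _).symm
    · rw [mul_sub, mul_one, ← smul_eq_mul, ← map_smul, ← map_smul, smul_eq_mul, mul_one,
        Submodule.mkQ_apply, (Submodule.Quotient.mk_eq_zero I).2 hx, map_zero, sub_zero]
  · rintro ⟨w, hw, hIw⟩
    refine Module.Projective.of_split (I.liftQ (LinearMap.toSpanSingleton R R (1 - w))
      fun x hx ↦ ?_) I.mkQ (Submodule.linearMap_qext _ (LinearMap.ext_ring ?_))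
    · rw [LinearMap.mem_ker, LinearMap.toSpanSingleton_apply, smul_eq_mul, mul_sub, mul_one,
        hIw x hx, sub_self]
    · simpa [sub_eq_self] using hw

lemma projective_span_of_isIdempotentElem {e : R} (he : IsIdempotentElem e) :
    Module.Projective R ↥(Ideal.span {e}) := by
  let f : R →ₗ[R] ↥(Ideal.span {e}) := (LinearMap.toSpanSingleton R R e).codRestrict _ fun x ↦
    Ideal.mul_mem_left _ x (Ideal.mem_span_singleton_self e)
  refine Module.Projective.of_split (Submodule.subtype _) f (LinearMap.ext fun ⟨x, hx⟩ ↦ ?_)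
  obtain ⟨y, rfl⟩ := Ideal.mem_span_singleton'.1 hx
  exact Subtype.ext ((mul_assoc y e e).trans (congrArg (y * ·) he))

lemma hasProjectiveDimensionLT_of_isFiniteLength {n : ℕ}
    (h : ∀ (S : Type) [AddCommGroup S] [Module R S] [IsSimpleModule R S],
      HasProjectiveDimensionLT (ModuleCat.of R S) n) (hM : IsFiniteLength R M) :
    HasProjectiveDimensionLT (ModuleCat.of R M) n := by
  induction hM with
  | of_subsingleton =>
    have := (hasProjectiveDimensionLT_zero_iff (R := R)).2 ‹_›
    exact hasProjectiveDimensionLT_of_ge _ 0 n n.zero_le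
  | of_simple_quotient _ ih => exact (shortExact_mkQ _).hasProjectiveDimensionLT_X₂ n ih (h _)

end HomologicalDimension

/-- The length-two path `a·b` exists and lies in the ideal `I`, so that forbidden paths are the
chains of this relation. -/
def GentleData.Forbidden (Q : GentleData) (a b : Q.A) : Prop :=
  Q.tgt a = Q.src b ∧ Q.rel a b

/-- The length-two path `a·b` exists and is nonzero in `kQ/I`. -/
def GentleData.Permitted (Q : GentleData) (a b : Q.A) : Prop :=
  Q.tgt a = Q.src b ∧ ¬ Q.rel a b

/-- The ideal `I` is admissible: the paths avoiding the relations have bounded length. -/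
def GentleData.IsAdmissible (Q : GentleData) : Prop :=
  ∃ N : ℕ, ∀ l : List Q.A, l.IsChain Q.Permitted → l.length ≤ N

namespace GentleAlgebra

variable {k : Type} [Field k] {Q : GentleData}

section Generators

lemma idemOf_mul_self (v : Q.V) : idemOf k Q v * idemOf k Q v = idemOf k Q v := by
  simpa [idemOf, ofGen] using RingQuot.mkAlgHom_rel k (GentleRel.idem (k := k) v)

lemma idemOf_mul_idemOf_of_ne {v w : Q.V} (h : v ≠ w) : idemOf k Q v * idemOf k Q w = 0 := by
  simpa [idemOf, ofGen] using RingQuot.mkAlgHom_rel k (GentleRel.orth (k := k) v w h)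

lemma sum_idemOf : ∑ v, idemOf k Q v = 1 := by
  simpa [idemOf, ofGen] using RingQuot.mkAlgHom_rel k (GentleRel.sum_idem (k := k) (Q := Q))

lemma idemOf_src_mul_arrOf (a : Q.A) : idemOf k Q (Q.src a) * arrOf k Q a = arrOf k Q a := by
  simpa [idemOf, arrOf, ofGen] using RingQuot.mkAlgHom_rel k (GentleRel.src_mul (k := k) a)

lemma arrOf_mul_idemOf_tgt (a : Q.A) : arrOf k Q a * idemOf k Q (Q.tgt a) = arrOf k Q a := by
  simpa [idemOf, arrOf, ofGen] using RingQuot.mkAlgHom_rel k (GentleRel.mul_tgt (k := k) a)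

lemma arrOf_mul_arrOf_of_rel {a b : Q.A} (h : Q.rel a b) : arrOf k Q a * arrOf k Q b = 0 := by
  simpa [arrOf, ofGen] using RingQuot.mkAlgHom_rel k (GentleRel.relation (k := k) a b h)

lemma arrOf_mul_idemOf_of_ne {v : Q.V} {a : Q.A} (h : Q.tgt a ≠ v) :
    arrOf k Q a * idemOf k Q v = 0 := by
  rw [← arrOf_mul_idemOf_tgt, mul_assoc, idemOf_mul_idemOf_of_ne h, mul_zero]

lemma arrOf_mul_arrOf_of_ne {a b : Q.A} (h : Q.tgt a ≠ Q.src b) :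
    arrOf k Q a * arrOf k Q b = 0 := by
  rw [← idemOf_src_mul_arrOf b, ← mul_assoc, arrOf_mul_idemOf_of_ne h, zero_mul]

@[elab_as_elim]
lemma induction {P : GentleAlgebra k Q → Prop} (algebraMap : ∀ c : k, P (algebraMap k _ c))
    (idem : ∀ v, P (idemOf k Q v)) (arr : ∀ a, P (arrOf k Q a))
    (mul : ∀ x y, P x → P y → P (x * y)) (add : ∀ x y, P x → P y → P (x + y))
    (x : GentleAlgebra k Q) : P x := by
  obtain ⟨y, rfl⟩ := RingQuot.mkAlgHom_surjective k (GentleRel k Q) x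
  induction y using FreeAlgebra.induction with
  | grade0 c => simpa only [AlgHom.commutes] using algebraMap c
  | grade1 g =>
    cases g with
    | vertex v => exact idem v
    | arrow a => exact arr a
  | mul a b ha hb => rw [map_mul]; exact mul _ _ ha hb
  | add a b ha hb => rw [map_add]; exact add _ _ ha hb

variable {B : Type} [Ring B] [Algebra k B]

/-- The universal property of `kQ/I`: an assignment of the generators satisfying the defining
relations extends to an algebra homomorphism. -/
noncomputable def lift (f : GenSym Q → B)
    (hf : ∀ ⦃x y⦄, GentleRel k Q x y → FreeAlgebra.lift k f x = FreeAlgebra.lift k f y) :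
    GentleAlgebra k Q →ₐ[k] B :=
  RingQuot.liftAlgHom k ⟨FreeAlgebra.lift k f, hf⟩

lemma lift_ofGen (f : GenSym Q → B)
    (hf : ∀ ⦃x y⦄, GentleRel k Q x y → FreeAlgebra.lift k f x = FreeAlgebra.lift k f y)
    (g : GenSym Q) : lift f hf (ofGen k Q g) = f g := by
  simp [lift, ofGen]

lemma algHom_ext {f g : GentleAlgebra k Q →ₐ[k] B}
    (h : ∀ x, f (ofGen k Q x) = g (ofGen k Q x)) : f = g :=
  RingQuot.ringQuot_ext' k _ _ (FreeAlgebra.hom_ext (funext h))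

/-- The augmentation `kQ/I → k` at a vertex `v`, through which `kQ/I` acts on the simple module
at `v`. -/
noncomputable def augmentation (k : Type) [Field k] {Q : GentleData} (v : Q.V) :
    GentleAlgebra k Q →ₐ[k] k :=
  lift (fun | .vertex w => if w = v then 1 else 0 | .arrow _ => 0) (by
    rintro _ _ (w | ⟨w, w', h⟩ | - | a | a | ⟨a, b, -⟩) <;>
      simp only [map_mul, map_sum, map_one, map_zero, FreeAlgebra.lift_ι_apply, mul_zero,
        mul_ite, mul_one, ite_self, Finset.sum_ite_eq', Finset.mem_univ, if_true]
    · split_ifs <;> rfl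
    · rw [ite_eq_right_iff, ite_eq_right_iff]
      exact fun hw' hw ↦ absurd (hw.trans hw'.symm) h)

lemma augmentation_idemOf_self (v : Q.V) : augmentation k v (idemOf k Q v) = 1 :=
  (lift_ofGen ..).trans (if_pos rfl)

lemma augmentation_idemOf_of_ne {v w : Q.V} (h : w ≠ v) :
    augmentation k v (idemOf k Q w) = 0 :=
  (lift_ofGen ..).trans (if_neg h)

lemma augmentation_arrOf (v : Q.V) (a : Q.A) : augmentation k v (arrOf k Q a) = 0 :=
  lift_ofGen ..

end Generators

section Syzygies

section Extension

variable {N : Type} [AddCommGroup N] [Module k N] [Module (GentleAlgebra k Q) N]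
  [IsScalarTower k (GentleAlgebra k Q) N]

/-- The action of the generators on an extension of the product of the simple modules `S(v)` by
a module `N`, where the arrow `b` maps the generator of `S(t(b))` to a prescribed element `n b`. -/
noncomputable def extensionGen (n : Q.A → N) : GenSym Q → Module.End k (N × (Q.V → k))
  | .vertex v => LinearMap.prodMap (Algebra.lsmul k k N (idemOf k Q v))
      (LinearMap.single k (fun _ ↦ k) v ∘ₗ LinearMap.proj v)
  | .arrow b => LinearMap.inl k N (Q.V → k) ∘ₗ LinearMap.coprod
      (Algebra.lsmul k k N (arrOf k Q b))
      (LinearMap.toSpanSingleton k N (n b) ∘ₗ LinearMap.proj (Q.tgt b))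

lemma extensionGen_vertex (n : Q.A → N) (v : Q.V) (x : N × (Q.V → k)) :
    extensionGen (k := k) n (.vertex v) x = (idemOf k Q v • x.1, Pi.single v (x.2 v)) := rfl

lemma extensionGen_arrow (n : Q.A → N) (b : Q.A) (x : N × (Q.V → k)) :
    extensionGen (k := k) n (.arrow b) x = (arrOf k Q b • x.1 + x.2 (Q.tgt b) • n b, 0) := rfl

lemma lift_extensionGen_eq {n : Q.A → N} (hsrc : ∀ b, idemOf k Q (Q.src b) • n b = n b)
    (hrel : ∀ b c, Q.rel b c → arrOf k Q b • n c = 0) ⦃x y : FreeAlgebra k (GenSym Q)⦄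
    (h : GentleRel k Q x y) :
    FreeAlgebra.lift k (extensionGen (k := k) n) x = FreeAlgebra.lift k (extensionGen n) y := by
  refine LinearMap.ext fun m ↦ ?_
  cases h <;>
    simp only [map_mul, map_sum, map_one, map_zero, FreeAlgebra.lift_ι_apply,
      Module.End.mul_apply, Module.End.one_apply, LinearMap.sum_apply, LinearMap.zero_apply,
      extensionGen_vertex, extensionGen_arrow, smul_add, Pi.zero_apply, zero_smul,
      add_zero, smul_smul, Pi.single_eq_same, Pi.single_zero]
  case idem v => rw [idemOf_mul_self]
  case orth v w h => rw [idemOf_mul_idemOf_of_ne h, zero_smul, Pi.single_eq_of_ne h,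
    Pi.single_zero, Prod.mk_zero_zero]
  case sum_idem =>
    refine Prod.ext ?_ ?_
    · rw [Prod.fst_sum, ← Finset.sum_smul, sum_idemOf, one_smul]
    · rw [Prod.snd_sum, Finset.univ_sum_single]
  case src_mul b => rw [idemOf_src_mul_arrOf, smul_comm, hsrc]
  case mul_tgt b => rw [arrOf_mul_idemOf_tgt]
  case relation b c h => rw [arrOf_mul_arrOf_of_rel h, zero_smul, zero_add, smul_comm, hrel b c h,
    smul_zero, Prod.mk_zero_zero]

-- Fox calculus: the arrows freely generate the augmentation ideal up to the relations of `Q`.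
theorem exists_addMonoidHom_mul_arrOf {n : Q.A → N}
    (hsrc : ∀ b, idemOf k Q (Q.src b) • n b = n b)
    (hrel : ∀ b c, Q.rel b c → arrOf k Q b • n c = 0) :
    ∃ D : GentleAlgebra k Q →+ N, ∀ y b, D (y * arrOf k Q b) = y • n b := by
  let ρ : GentleAlgebra k Q →ₐ[k] Module.End k (N × (Q.V → k)) :=
    lift (extensionGen n) (lift_extensionGen_eq hsrc hrel)
  have hρ (y : GentleAlgebra k Q) : ∀ m, ρ y (m, 0) = (y • m, 0) := by
    induction y using induction with
    | algebraMap c => simp [ρ, Module.algebraMap_end_apply]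
    | idem v => simp [ρ, idemOf, lift_ofGen, extensionGen_vertex]
    | arr a => simp [ρ, arrOf, lift_ofGen, extensionGen_arrow]
    | mul x y hx hy => simp [hx, hy, mul_smul]
    | add x y hx hy => simp [hx, hy, add_smul]
  have hρ_arr (b : Q.A) : ρ (arrOf k Q b) (0, 1) = (n b, 0) := by
    simp [ρ, arrOf, lift_ofGen, extensionGen_arrow]
  exact ⟨AddMonoidHom.mk' (fun y ↦ (ρ y (0, 1)).1) fun y z ↦ by simp,
    fun y b ↦ by simp [hρ_arr, hρ]⟩

end Extension

/-- The left ideal `A·a` generated by an arrow `a`. -/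
noncomputable def arrowIdeal (k : Type) [Field k] {Q : GentleData} (a : Q.A) :
    Ideal (GentleAlgebra k Q) :=
  Ideal.span {arrOf k Q a}

/-- The left ideal generated by a set of arrows. -/
noncomputable def arrowSpan (k : Type) [Field k] {Q : GentleData} (T : Set Q.A) :
    Ideal (GentleAlgebra k Q) :=
  ⨆ a ∈ T, arrowIdeal k a

lemma mem_arrowIdeal {a : Q.A} {x : GentleAlgebra k Q} :
    x ∈ arrowIdeal k a ↔ ∃ y, y * arrOf k Q a = x :=
  Ideal.mem_span_singleton'

lemma arrowSpan_le_iff {T : Set Q.A} {I : Ideal (GentleAlgebra k Q)} :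
    arrowSpan k T ≤ I ↔ ∀ a ∈ T, arrOf k Q a ∈ I := by
  simp only [arrowSpan, arrowIdeal, iSup₂_le_iff, Ideal.span_singleton_le_iff_mem]

lemma mul_arrOf_mem_arrowSpan (x : GentleAlgebra k Q) {a : Q.A} {T : Set Q.A} (ha : a ∈ T) :
    x * arrOf k Q a ∈ arrowSpan k T :=
  Ideal.mul_mem_left _ x (arrowSpan_le_iff.1 le_rfl a ha)

lemma arrOf_mul_idemOf_src_mem_arrowSpan {a b : Q.A} (h : Q.rel b a) :
    arrOf k Q b * idemOf k Q (Q.src a) ∈ arrowSpan k {c | Q.Forbidden c a} := by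
  by_cases hba : Q.tgt b = Q.src a
  · rw [← hba, arrOf_mul_idemOf_tgt, ← one_mul (arrOf k Q b)]
    exact mul_arrOf_mem_arrowSpan 1 ⟨hba, h⟩
  · rw [arrOf_mul_idemOf_of_ne hba]
    exact zero_mem _

theorem mul_idemOf_src_mem_of_sum_mul_arrOf_eq_zero {y : Q.A → GentleAlgebra k Q}
    (hy : ∑ b, y b * arrOf k Q b = 0) (a : Q.A) :
    y a * idemOf k Q (Q.src a) ∈ arrowSpan k {c | Q.Forbidden c a} := by
  let I := arrowSpan k {c | Q.Forbidden c a}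
  obtain ⟨D, hD⟩ := exists_addMonoidHom_mul_arrOf (k := k)
    (n := Pi.single a (I.mkQ (idemOf k Q (Q.src a))))
    (fun b ↦ by
      obtain rfl | hb := eq_or_ne b a
      · rw [Pi.single_eq_same, ← map_smul, smul_eq_mul, idemOf_mul_self]
      · rw [Pi.single_eq_of_ne hb, smul_zero])
    (fun b c hbc ↦ by
      obtain rfl | hc := eq_or_ne c a
      · rw [Pi.single_eq_same, ← map_smul]
        exact (Submodule.Quotient.mk_eq_zero I).2 (arrOf_mul_idemOf_src_mem_arrowSpan hbc)
      · rw [Pi.single_eq_of_ne hc, smul_zero])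
  have hDy := congrArg D hy
  simp only [map_sum, hD, Pi.single_apply, smul_ite, smul_zero, Finset.sum_ite_eq',
    Finset.mem_univ, if_true, map_zero] at hDy
  exact (Submodule.Quotient.mk_eq_zero I).1 hDy

lemma mul_idemOf_src_mem_iff {x : GentleAlgebra k Q} {a : Q.A} :
    x * idemOf k Q (Q.src a) ∈ arrowSpan k {c | Q.Forbidden c a} ↔ x * arrOf k Q a = 0 := by
  constructor
  · intro h
    have : arrowSpan k {c | Q.Forbidden c a} ≤
        LinearMap.ker (LinearMap.toSpanSingleton _ _ (arrOf k Q a)) :=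
      arrowSpan_le_iff.2 fun c hc ↦ arrOf_mul_arrOf_of_rel hc.2
    rw [← idemOf_src_mul_arrOf, ← mul_assoc]
    exact this h
  · intro h
    simpa using mul_idemOf_src_mem_of_sum_mul_arrOf_eq_zero (y := Pi.single a x)
      (by simpa [Pi.single_apply] using h) a

theorem iSupIndep_arrowIdeal : iSupIndep (arrowIdeal k (Q := Q)) := by
  refine (iSupIndep_iff_finsetSum_eq_zero_imp_eq_zero _).2 fun s v hv hsum a ha ↦ ?_
  choose! y hy using fun b hb ↦ mem_arrowIdeal.1 (hv b hb)
  have hy' : ∑ b, (if b ∈ s then y b else 0) * arrOf k Q b = 0 := by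
    simp only [ite_mul, zero_mul, Finset.sum_ite_mem, Finset.univ_inter]
    rw [← hsum, Finset.sum_congr rfl hy]
  have := mul_idemOf_src_mem_iff.1 (mul_idemOf_src_mem_of_sum_mul_arrOf_eq_zero hy' a)
  rwa [if_pos ha, hy a ha] at this

end Syzygies

section PathQuotients

open CategoryTheory

/-- The left ideal of those `x` with `x e_v ∈ ∑_{a ∈ T} A·a`. For arrows `T` ending at `v` the
quotient by it is the quotient of the projective module `A e_v` by `∑_{a ∈ T} A·a`. -/
noncomputable def pathIdeal (k : Type) [Field k] {Q : GentleData} (v : Q.V) (T : Set Q.A) :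
    Ideal (GentleAlgebra k Q) :=
  Submodule.comap (LinearMap.toSpanSingleton _ _ (idemOf k Q v)) (arrowSpan k T)

lemma mem_pathIdeal {v : Q.V} {T : Set Q.A} {x : GentleAlgebra k Q} :
    x ∈ pathIdeal k v T ↔ x * idemOf k Q v ∈ arrowSpan k T := Iff.rfl

lemma mul_idemOf_of_mem_arrowSpan {v : Q.V} {T : Set Q.A} (hT : ∀ a ∈ T, Q.tgt a = v)
    {x : GentleAlgebra k Q} (hx : x ∈ arrowSpan k T) : x * idemOf k Q v = x := by
  have hle : arrowSpan k T ≤ LinearMap.ker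
      (LinearMap.toSpanSingleton (GentleAlgebra k Q) _ (idemOf k Q v) - LinearMap.id) :=
    arrowSpan_le_iff.2 fun a ha ↦ LinearMap.mem_ker.2
      (sub_eq_zero.2 (hT a ha ▸ arrOf_mul_idemOf_tgt a))
  exact sub_eq_zero.1 (hle hx)

lemma arrOf_mem_pathIdeal {v : Q.V} {T : Set Q.A} (hT : ∀ a ∈ T, Q.tgt a = v) {a : Q.A}
    (ha : a ∈ T) : arrOf k Q a ∈ pathIdeal k v T := by
  rw [mem_pathIdeal, ← hT a ha, arrOf_mul_idemOf_tgt]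
  exact arrowSpan_le_iff.1 le_rfl a ha

lemma mem_span_one_sub_idemOf {v : Q.V} {x : GentleAlgebra k Q} :
    x ∈ Ideal.span {1 - idemOf k Q v} ↔ x * idemOf k Q v = 0 := by
  rw [Ideal.mem_span_singleton']
  constructor
  · rintro ⟨y, rfl⟩
    rw [mul_assoc, sub_mul, one_mul, idemOf_mul_self, sub_self, mul_zero]
  · exact fun hx ↦ ⟨x, by rw [mul_sub, mul_one, hx, sub_zero]⟩

lemma disjoint_span_one_sub_idemOf_arrowSpan {v : Q.V} {T : Set Q.A}
    (hT : ∀ a ∈ T, Q.tgt a = v) :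
    Disjoint (Ideal.span {1 - idemOf k Q v}) (arrowSpan k T) :=
  Submodule.disjoint_def.2 fun _ hx hx' ↦
    (mul_idemOf_of_mem_arrowSpan hT hx').symm.trans (mem_span_one_sub_idemOf.1 hx)

lemma pathIdeal_eq_sup {v : Q.V} {T : Set Q.A} (hT : ∀ a ∈ T, Q.tgt a = v) :
    pathIdeal k v T = Ideal.span {1 - idemOf k Q v} ⊔ arrowSpan k T := by
  refine le_antisymm (fun x hx ↦ ?_) (sup_le (fun x hx ↦ ?_)
    (arrowSpan_le_iff.2 fun a ha ↦ arrOf_mem_pathIdeal hT ha))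
  · rw [← sub_add_cancel x (x * idemOf k Q v)]
    refine Submodule.add_mem_sup (mem_span_one_sub_idemOf.2 ?_) hx
    rw [sub_mul, mul_assoc, idemOf_mul_self, sub_self]
  · rw [mem_pathIdeal, mem_span_one_sub_idemOf.1 hx]
    exact zero_mem _

lemma exists_sum_mul_arrOf_eq {T : Set Q.A} {x : GentleAlgebra k Q} (hx : x ∈ arrowSpan k T) :
    ∃ y : Q.A → GentleAlgebra k Q, ∑ b, y b * arrOf k Q b = x :=
  (Submodule.mem_span_range_iff_exists_fun _).1
    (arrowSpan_le_iff (I := Ideal.span (Set.range (arrOf k Q))).2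
      (fun a _ ↦ Ideal.subset_span ⟨a, rfl⟩) hx)

lemma augmentation_of_mem_arrowSpan (v : Q.V) {T : Set Q.A} {x : GentleAlgebra k Q}
    (hx : x ∈ arrowSpan k T) : augmentation k v x = 0 :=
  arrowSpan_le_iff (I := RingHom.ker (augmentation k v)).2
    (fun a _ ↦ augmentation_arrOf v a) hx

lemma arrOf_mul_ne_of_mem_arrowSpan (a : Q.A) {T : Set Q.A} {x : GentleAlgebra k Q}
    (hx : x ∈ arrowSpan k T) : arrOf k Q a * x ≠ arrOf k Q a := by
  intro h
  obtain ⟨y, rfl⟩ := exists_sum_mul_arrOf_eq hx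
  have hsum : ∑ b, (arrOf k Q a * y b - (Pi.single a 1 : Q.A → GentleAlgebra k Q) b) *
      arrOf k Q b = 0 := by
    simp only [sub_mul, mul_assoc, Finset.sum_sub_distrib, ← Finset.mul_sum, Pi.single_apply,
      ite_mul, one_mul, zero_mul, Finset.sum_ite_eq', Finset.mem_univ, if_true, h, sub_self]
  have hmem := mul_idemOf_src_mem_of_sum_mul_arrOf_eq_zero hsum a
  have := augmentation_of_mem_arrowSpan (Q.src a) hmem
  simp [augmentation_arrOf, augmentation_idemOf_self] at this

lemma arrOf_ne_zero (a : Q.A) : arrOf k Q a ≠ 0 := fun h ↦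
  arrOf_mul_ne_of_mem_arrowSpan a (zero_mem (arrowSpan k ∅)) (by rw [mul_zero, h])

lemma not_hasProjectiveDimensionLT_arrowIdeal_zero (b : Q.A) :
    ¬ HasProjectiveDimensionLT (ModuleCat.of (GentleAlgebra k Q) (arrowIdeal k b)) 0 := fun h ↦ by
  have := hasProjectiveDimensionLT_zero_iff.1 h
  exact arrOf_ne_zero b (congrArg Subtype.val (Subsingleton.elim
    (⟨arrOf k Q b, Ideal.mem_span_singleton_self _⟩ : arrowIdeal k b) 0))

theorem projective_quotient_pathIdeal_iff {v : Q.V} {T : Set Q.A} (hT : ∀ a ∈ T, Q.tgt a = v) :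
    Module.Projective (GentleAlgebra k Q) (GentleAlgebra k Q ⧸ pathIdeal k v T) ↔ T = ∅ := by
  rw [projective_quotient_iff]
  constructor
  · rintro ⟨w, hw, hTw⟩
    refine Set.eq_empty_of_forall_notMem fun a ha ↦
      arrOf_mul_ne_of_mem_arrowSpan a (mem_pathIdeal.1 hw) ?_
    rw [← mul_assoc, hTw _ (arrOf_mem_pathIdeal hT ha), ← hT a ha, arrOf_mul_idemOf_tgt]
  · rintro rfl
    have hmem {x : GentleAlgebra k Q} : x ∈ pathIdeal k v ∅ ↔ x * idemOf k Q v = 0 := by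
      rw [mem_pathIdeal, arrowSpan, iSup_emptyset, Submodule.mem_bot]
    refine ⟨1 - idemOf k Q v, hmem.2 ?_, fun x hx ↦ ?_⟩
    · rw [sub_mul, one_mul, idemOf_mul_self, sub_self]
    · rw [mul_sub, mul_one, hmem.1 hx, sub_zero]

theorem hasProjectiveDimensionLT_quotient_pathIdeal_iff {v : Q.V} {T : Set Q.A}
    (hT : ∀ a ∈ T, Q.tgt a = v) (n : ℕ) :
    HasProjectiveDimensionLT
        (ModuleCat.of (GentleAlgebra k Q) (GentleAlgebra k Q ⧸ pathIdeal k v T)) (n + 1) ↔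
      ∀ a ∈ T, HasProjectiveDimensionLT
        (ModuleCat.of (GentleAlgebra k Q) (arrowIdeal k a)) n := by
  cases n with
  | zero =>
    rw [zero_add, hasProjectiveDimensionLT_one_iff, projective_quotient_pathIdeal_iff hT,
      Set.eq_empty_iff_forall_notMem]
    exact forall₂_congr fun a _ ↦
      iff_of_false not_false (not_hasProjectiveDimensionLT_arrowIdeal_zero a)
  | succ n =>
    have hidem : HasProjectiveDimensionLT
        (ModuleCat.of (GentleAlgebra k Q) (Ideal.span {1 - idemOf k Q v})) 1 :=
      hasProjectiveDimensionLT_one_iff.2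
        (projective_span_of_isIdempotentElem (IsIdempotentElem.one_sub (idemOf_mul_self v)))
    rw [(shortExact_mkQ (pathIdeal k v T)).hasProjectiveDimensionLT_X₃_iff n
      (ModuleCat.projective_of_free (Module.Basis.singleton Unit (GentleAlgebra k Q)))]
    change HasProjectiveDimensionLT (ModuleCat.of _ ↥(pathIdeal k v T)) (n + 1) ↔ _
    rw [pathIdeal_eq_sup hT,
      hasProjectiveDimensionLT_sup_iff (disjoint_span_one_sub_idemOf_arrowSpan hT), arrowSpan,
      hasProjectiveDimensionLT_biSup_iff iSupIndep_arrowIdeal T.toFinite]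
    exact and_iff_right (hasProjectiveDimensionLT_of_ge _ 1 (n + 1) (by omega))

/-- The isomorphism `x ↦ x b` onto the left ideal generated by the arrow `b`, which exhibits its
first syzygy as a sum of left ideals generated by arrows. -/
noncomputable def quotientPathIdealEquiv (k : Type) [Field k] {Q : GentleData} (b : Q.A) :
    (GentleAlgebra k Q ⧸ pathIdeal k (Q.src b) {a | Q.Forbidden a b}) ≃ₗ[GentleAlgebra k Q]
      arrowIdeal k b :=
  (Submodule.quotEquivOfEq _ _ (Submodule.ext fun _ ↦ mul_idemOf_src_mem_iff)).trans
    ((LinearMap.toSpanSingleton _ _ (arrOf k Q b)).quotKerEquivRange.trans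
      (.ofEq _ _ (LinearMap.range_toSpanSingleton _)))

theorem hasProjectiveDimensionLT_arrowIdeal_succ_iff (b : Q.A) (n : ℕ) :
    HasProjectiveDimensionLT (ModuleCat.of (GentleAlgebra k Q) (arrowIdeal k b)) (n + 1) ↔
      ∀ a, Q.Forbidden a b →
        HasProjectiveDimensionLT (ModuleCat.of (GentleAlgebra k Q) (arrowIdeal k a)) n := by
  rw [← hasProjectiveDimensionLT_iff_of_linearEquiv (quotientPathIdealEquiv k b),
    hasProjectiveDimensionLT_quotient_pathIdeal_iff fun a ha ↦ ha.1]
  rfl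

theorem hasProjectiveDimensionLT_arrowIdeal_iff (b : Q.A) (n : ℕ) :
    HasProjectiveDimensionLT (ModuleCat.of (GentleAlgebra k Q) (arrowIdeal k b)) n ↔
      ∀ l : List Q.A, (b :: l).IsChain (flip Q.Forbidden) → l.length < n := by
  induction n generalizing b with
  | zero =>
    exact iff_of_false (not_hasProjectiveDimensionLT_arrowIdeal_zero b) fun h ↦
      Nat.not_lt_zero _ (h [] (List.isChain_singleton b))
  | succ n ih =>
    simp only [hasProjectiveDimensionLT_arrowIdeal_succ_iff, ih]
    constructor
    · rintro h (_ | ⟨a, l⟩) hl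
      · exact n.succ_pos
      · rw [List.isChain_cons_cons] at hl
        exact Nat.succ_lt_succ (h a hl.1 l hl.2)
    · exact fun h a hab l hl ↦ Nat.lt_of_succ_lt_succ (h (a :: l) (hl.cons_cons hab))

end PathQuotients

section FiniteLength

lemma isChain_of_prod_map_arrOf_ne_zero {l : List Q.A} (h : (l.map (arrOf k Q)).prod ≠ 0) :
    l.IsChain Q.Permitted := by
  refine List.isChain_iff_forall_rel_of_append_cons_cons.2 fun {a b l₁ l₂} hl ↦ ?_
  by_contra hab
  have hzero : arrOf k Q a * arrOf k Q b = 0 := by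
    by_cases hcomp : Q.tgt a = Q.src b
    · exact arrOf_mul_arrOf_of_rel (not_not.1 fun hrel ↦ hab ⟨hcomp, hrel⟩)
    · exact arrOf_mul_arrOf_of_ne hcomp
  refine h ?_
  simp only [hl, List.map_append, List.map_cons, List.prod_append, List.prod_cons]
  rw [← mul_assoc (arrOf k Q a), hzero, zero_mul, mul_zero]

lemma finite_prod_map_arrOf_ne_zero (hQ : Q.IsAdmissible) :
    {l : List Q.A | (l.map (arrOf k Q)).prod ≠ 0}.Finite := by
  obtain ⟨N, hN⟩ := hQ
  exact (List.finite_length_le Q.A N).subset fun l hl ↦ hN l (isChain_of_prod_map_arrOf_ne_zero hl)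

/-- The subspace of `kQ/I` spanned by the paths, each written as `e_v` times a product of
arrows. -/
noncomputable def pathSpan (k : Type) [Field k] (Q : GentleData) :
    Submodule k (GentleAlgebra k Q) :=
  Submodule.span k (Set.range
    fun p : Q.V × List Q.A ↦ idemOf k Q p.1 * (p.2.map (arrOf k Q)).prod)

lemma idemOf_mul_prod_mem_pathSpan (v : Q.V) (l : List Q.A) :
    idemOf k Q v * (l.map (arrOf k Q)).prod ∈ pathSpan k Q :=
  Submodule.subset_span ⟨(v, l), rfl⟩

lemma mul_mem_pathSpan_of_forall {x : GentleAlgebra k Q}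
    (h : ∀ v (l : List Q.A), x * (idemOf k Q v * (l.map (arrOf k Q)).prod) ∈ pathSpan k Q)
    {y : GentleAlgebra k Q} (hy : y ∈ pathSpan k Q) : x * y ∈ pathSpan k Q := by
  have hle : pathSpan k Q ≤ (pathSpan k Q).comap (LinearMap.mulLeft k x) :=
    Submodule.span_le.2 (Set.range_subset_iff.2 fun p ↦ h p.1 p.2)
  exact hle hy

lemma mul_mem_pathSpan (x : GentleAlgebra k Q) {y : GentleAlgebra k Q} (hy : y ∈ pathSpan k Q) :
    x * y ∈ pathSpan k Q := by
  induction x using induction generalizing y with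
  | algebraMap c =>
    rw [← Algebra.smul_def]
    exact (pathSpan k Q).smul_mem c hy
  | idem w =>
    refine mul_mem_pathSpan_of_forall (fun v l ↦ ?_) hy
    rw [← mul_assoc]
    obtain rfl | hwv := eq_or_ne w v
    · rw [idemOf_mul_self]
      exact idemOf_mul_prod_mem_pathSpan w l
    · rw [idemOf_mul_idemOf_of_ne hwv, zero_mul]
      exact zero_mem _
  | arr a =>
    refine mul_mem_pathSpan_of_forall (fun v l ↦ ?_) hy
    rw [← mul_assoc]
    obtain rfl | hav := eq_or_ne (Q.tgt a) v
    · rw [arrOf_mul_idemOf_tgt, ← idemOf_src_mul_arrOf, mul_assoc]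
      exact idemOf_mul_prod_mem_pathSpan (Q.src a) (a :: l)
    · rw [arrOf_mul_idemOf_of_ne hav, zero_mul]
      exact zero_mem _
  | mul x z hx hz =>
    rw [mul_assoc]
    exact hx (hz hy)
  | add x z hx hz =>
    rw [add_mul]
    exact add_mem (hx hy) (hz hy)

theorem pathSpan_eq_top : pathSpan k Q = ⊤ := by
  have hone : (1 : GentleAlgebra k Q) ∈ pathSpan k Q :=
    sum_idemOf (k := k) (Q := Q) ▸ sum_mem fun v _ ↦
      mul_one (idemOf k Q v) ▸ idemOf_mul_prod_mem_pathSpan v []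
  exact eq_top_iff.2 fun x _ ↦ mul_one x ▸ mul_mem_pathSpan x hone

theorem moduleFinite (hQ : Q.IsAdmissible) : Module.Finite k (GentleAlgebra k Q) := by
  rw [Module.finite_def, ← pathSpan_eq_top, pathSpan,
    ← Submodule.span_sdiff_singleton_zero]
  have hpaths := (Set.finite_univ (α := Q.V)).prod (finite_prod_map_arrOf_ne_zero (k := k) hQ)
  refine Submodule.fg_span ((hpaths.image
    fun p ↦ idemOf k Q p.1 * (p.2.map (arrOf k Q)).prod).subset ?_)
  rintro _ ⟨⟨p, rfl⟩, hp⟩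
  exact ⟨p, ⟨Set.mem_univ _, right_ne_zero_of_mul hp⟩, rfl⟩

variable {M : Type} [AddCommGroup M] [Module (GentleAlgebra k Q) M]

-- A nonzero path acting nontrivially on `m`, of maximal length, maps `m` into the socle.
lemma exists_ne_zero_forall_arrOf_smul_eq_zero [Nontrivial M] (hQ : Q.IsAdmissible) :
    ∃ m : M, m ≠ 0 ∧ ∀ a, arrOf k Q a • m = 0 := by
  obtain ⟨m, hm⟩ := exists_ne (0 : M)
  have hfin : {l : List Q.A | (l.map (arrOf k Q)).prod • m ≠ 0}.Finite :=
    (finite_prod_map_arrOf_ne_zero (k := k) hQ).subset fun l ↦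
      mt fun h ↦ by rw [h, zero_smul]
  obtain ⟨l, hl, hmax⟩ := Set.exists_max_image _ List.length hfin
    ⟨[], by rwa [Set.mem_ofPred_eq, List.map_nil, List.prod_nil, one_smul]⟩
  refine ⟨_, hl, fun a ↦ not_not.1 fun ha ↦ (Nat.lt_succ_self l.length).not_ge (hmax (a :: l) ?_)⟩
  rwa [Set.mem_ofPred_eq, List.map_cons, List.prod_cons, mul_smul]

lemma exists_ne_zero_idemOf_smul_eq_self [Nontrivial M] (hQ : Q.IsAdmissible) :
    ∃ (v : Q.V) (m : M), m ≠ 0 ∧ idemOf k Q v • m = m ∧ ∀ a, arrOf k Q a • m = 0 := by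
  obtain ⟨m, hm, harr⟩ := exists_ne_zero_forall_arrOf_smul_eq_zero (k := k) (M := M) hQ
  obtain ⟨v, -, hv⟩ : ∃ v ∈ Finset.univ, idemOf k Q v • m ≠ 0 :=
    Finset.exists_ne_zero_of_sum_ne_zero (by rwa [← Finset.sum_smul, sum_idemOf, one_smul])
  refine ⟨v, idemOf k Q v • m, hv, by rw [← mul_smul, idemOf_mul_self], fun a ↦ ?_⟩
  rw [← mul_smul]
  obtain rfl | hav := eq_or_ne (Q.tgt a) v
  · rw [arrOf_mul_idemOf_tgt, harr]
  · rw [arrOf_mul_idemOf_of_ne hav, zero_smul]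

lemma mul_idemOf_sub_augmentation_smul_mem (v : Q.V) (x : GentleAlgebra k Q) :
    x * idemOf k Q v - augmentation k v x • idemOf k Q v ∈ arrowSpan k {a | Q.tgt a = v} := by
  induction x using induction with
  | algebraMap c =>
    rw [AlgHom.commutes, Algebra.algebraMap_self_apply, ← Algebra.smul_def, sub_self]
    exact zero_mem _
  | idem w =>
    obtain rfl | hwv := eq_or_ne w v
    · rw [idemOf_mul_self, augmentation_idemOf_self, one_smul, sub_self]
      exact zero_mem _
    · rw [idemOf_mul_idemOf_of_ne hwv, augmentation_idemOf_of_ne hwv, zero_smul, sub_self]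
      exact zero_mem _
  | arr a =>
    rw [augmentation_arrOf, zero_smul, sub_zero]
    obtain hav | hav := eq_or_ne (Q.tgt a) v
    · rw [← hav, arrOf_mul_idemOf_tgt]
      exact arrowSpan_le_iff.1 le_rfl a rfl
    · rw [arrOf_mul_idemOf_of_ne hav]
      exact zero_mem _
  | mul x y hx hy =>
    convert add_mem (Ideal.mul_mem_left _ x hy)
      ((arrowSpan k _).smul_of_tower_mem (augmentation k v y) hx) using 1
    simp only [map_mul, mul_sub, smul_sub, mul_smul_comm, mul_assoc, smul_smul]
    rw [mul_comm (augmentation k v y), sub_add_sub_cancel]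
  | add x y hx hy =>
    convert add_mem hx hy using 1
    rw [map_add, add_mul, add_smul, add_sub_add_comm]

theorem nonempty_quotient_pathIdeal_linearEquiv [IsSimpleModule (GentleAlgebra k Q) M]
    (hQ : Q.IsAdmissible) : ∃ v : Q.V, Nonempty
      ((GentleAlgebra k Q ⧸ pathIdeal k v {a | Q.tgt a = v}) ≃ₗ[GentleAlgebra k Q] M) := by
  have := IsSimpleModule.nontrivial (GentleAlgebra k Q) M
  obtain ⟨v, m, hm, hvm, harr⟩ := exists_ne_zero_idemOf_smul_eq_self (k := k) (M := M) hQ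
  let f := LinearMap.toSpanSingleton (GentleAlgebra k Q) M m
  have hspan : arrowSpan k {a | Q.tgt a = v} ≤ LinearMap.ker f :=
    arrowSpan_le_iff.2 fun a _ ↦ harr a
  have hker : pathIdeal k v {a | Q.tgt a = v} = LinearMap.ker f := by
    ext x
    rw [mem_pathIdeal, LinearMap.mem_ker, LinearMap.toSpanSingleton_apply]
    refine ⟨fun hx ↦ ?_, fun hx ↦ ?_⟩
    · rw [← hvm, ← mul_smul]
      exact hspan hx
    · have haug : algebraMap k (GentleAlgebra k Q) (augmentation k v x) • m = 0 := by
        have := hspan (mul_idemOf_sub_augmentation_smul_mem v x)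
        rwa [LinearMap.mem_ker, LinearMap.toSpanSingleton_apply, sub_smul, mul_smul, hvm, hx,
          zero_sub, neg_eq_zero, Algebra.smul_def, mul_smul, hvm] at this
      have haug' : augmentation k v x = 0 := not_not.1 fun h ↦
        hm (((Ne.isUnit h).map (algebraMap k _)).smul_eq_zero.1 haug)
      have := mul_idemOf_sub_augmentation_smul_mem v x
      rwa [haug', zero_smul, sub_zero] at this
  exact ⟨v, ⟨(Submodule.quotEquivOfEq _ _ hker).trans
    (f.quotKerEquivOfSurjective (IsSimpleModule.toSpanSingleton_surjective _ hm))⟩⟩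

end FiniteLength

section GlobalDimension

open CategoryTheory

/-- The maximal length of a forbidden path, which is infinite if there are arbitrarily long ones. -/
noncomputable def maxForbiddenLength (Q : GentleData) : ℕ∞ :=
  ⨆ (l : List Q.A) (_ : l.IsChain Q.Forbidden), (l.length : ℕ∞)

lemma maxForbiddenLength_le_iff {d : ℕ∞} :
    maxForbiddenLength Q ≤ d ↔ ∀ l : List Q.A, l.IsChain Q.Forbidden → l.length ≤ d :=
  iSup₂_le_iff

lemma maxForbiddenLength_le_natCast_iff {d : ℕ} : maxForbiddenLength Q ≤ d ↔
    ∀ (b : Q.A) (l : List Q.A), (b :: l).IsChain (flip Q.Forbidden) → l.length < d := by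
  simp only [maxForbiddenLength_le_iff, Nat.cast_le]
  constructor
  · intro h b l hl
    simpa using h (b :: l).reverse (List.isChain_reverse.2 hl)
  · intro h l hl
    rw [← List.length_reverse]
    cases hrev : l.reverse with
    | nil => exact d.zero_le
    | cons b l' => exact h b l' (hrev ▸ List.isChain_reverse.2 hl)

lemma hasProjectiveDimensionLT_of_isSimpleModule (hQ : Q.IsAdmissible) {d : ℕ}
    (hd : ∀ b : Q.A,
      HasProjectiveDimensionLT (ModuleCat.of (GentleAlgebra k Q) (arrowIdeal k b)) d)
    (S : Type) [AddCommGroup S] [Module (GentleAlgebra k Q) S]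
    [IsSimpleModule (GentleAlgebra k Q) S] :
    HasProjectiveDimensionLT (ModuleCat.of (GentleAlgebra k Q) S) (d + 1) := by
  obtain ⟨v, ⟨e⟩⟩ := nonempty_quotient_pathIdeal_linearEquiv (k := k) (M := S) hQ
  exact (hasProjectiveDimensionLT_iff_of_linearEquiv e _).1
    ((hasProjectiveDimensionLT_quotient_pathIdeal_iff (T := {a | Q.tgt a = v}) (fun _ ha ↦ ha) d).2
      fun a _ ↦ hd a)

theorem globalDim_le_iff_arrowIdeal (hQ : Q.IsAdmissible) {d : ℕ} :
    globalDim (GentleAlgebra k Q) ≤ d ↔ ∀ b : Q.A,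
      HasProjectiveDimensionLT (ModuleCat.of (GentleAlgebra k Q) (arrowIdeal k b)) d := by
  rw [globalDim_le_iff]
  constructor
  · intro h b
    have hb : ∀ a ∈ ({b} : Set Q.A), Q.tgt a = Q.tgt b := fun a ha ↦ congrArg Q.tgt ha
    exact (hasProjectiveDimensionLT_quotient_pathIdeal_iff hb d).1
      (h (ModuleCat.of _ _) inferInstance) b rfl
  · intro h M _
    have := moduleFinite (k := k) hQ
    have := IsArtinianRing.of_finite k (GentleAlgebra k Q)
    exact hasProjectiveDimensionLT_of_isFiniteLength
      (hasProjectiveDimensionLT_of_isSimpleModule hQ h)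
      (isFiniteLength_iff_isNoetherian_isArtinian.2 ⟨inferInstance, inferInstance⟩)

theorem globalDim_eq_maxForbiddenLength (hQ : Q.IsAdmissible) :
    globalDim (GentleAlgebra k Q) = maxForbiddenLength Q :=
  WithTop.eq_of_forall_le_coe_iff fun d ↦ by
    change _ ≤ (d : ℕ∞) ↔ _ ≤ (d : ℕ∞)
    rw [globalDim_le_iff_arrowIdeal hQ, maxForbiddenLength_le_natCast_iff]
    exact forall_congr' fun b ↦ hasProjectiveDimensionLT_arrowIdeal_iff b d

end GlobalDimension

section Opposite

/-- The opposite bound quiver, which presents the opposite algebra. -/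
abbrev _root_.GentleData.op (Q : GentleData) : GentleData where
  V := Q.V
  A := Q.A
  src := Q.tgt
  tgt := Q.src
  rel a b := Q.rel b a

lemma _root_.GentleData.IsAdmissible.op (hQ : Q.IsAdmissible) : Q.op.IsAdmissible := by
  obtain ⟨N, hN⟩ := hQ
  refine ⟨N, fun l hl ↦ ?_⟩
  rw [← List.length_reverse]
  exact hN _ (List.isChain_reverse.2 (hl.imp fun a b hab ↦ ⟨hab.1.symm, hab.2⟩))

lemma maxForbiddenLength_op_le : maxForbiddenLength Q.op ≤ maxForbiddenLength Q :=
  maxForbiddenLength_le_iff.2 fun l hl ↦ by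
    rw [← List.length_reverse]
    exact maxForbiddenLength_le_iff.1 le_rfl _
      (List.isChain_reverse.2 (hl.imp fun a b hab ↦ ⟨hab.1.symm, hab.2⟩))

lemma maxForbiddenLength_op : maxForbiddenLength Q.op = maxForbiddenLength Q :=
  maxForbiddenLength_op_le.antisymm (maxForbiddenLength_op_le (Q := Q.op))

/-- The homomorphism `kQ/I → (kQᵒᵖ/Iᵒᵖ)ᵒᵖ` reversing paths. -/
noncomputable def opHom (k : Type) [Field k] (Q : GentleData) :
    GentleAlgebra k Q →ₐ[k] (GentleAlgebra k Q.op)ᵐᵒᵖ :=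
  lift (fun | .vertex v => op (idemOf k Q.op v) | .arrow a => op (arrOf k Q.op a)) (by
    rintro _ _ (v | ⟨v, w, h⟩ | - | a | a | ⟨a, b, h⟩) <;>
      simp only [map_mul, map_sum, map_one, map_zero, FreeAlgebra.lift_ι_apply, ← op_mul]
    · rw [idemOf_mul_self]
    · rw [idemOf_mul_idemOf_of_ne (Q := Q.op) h.symm, op_zero]
    · exact unop_injective ((Finset.unop_sum _ _).trans (sum_idemOf (Q := Q.op)))
    · exact congrArg op (arrOf_mul_idemOf_tgt (Q := Q.op) a)
    · exact congrArg op (idemOf_src_mul_arrOf (Q := Q.op) a)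
    · exact congrArg op (arrOf_mul_arrOf_of_rel (Q := Q.op) h))

lemma opHom_idemOf (v : Q.V) : opHom k Q (idemOf k Q v) = op (idemOf k Q.op v) :=
  lift_ofGen ..

lemma opHom_arrOf (a : Q.A) : opHom k Q (arrOf k Q a) = op (arrOf k Q.op a) :=
  lift_ofGen ..

lemma opComm_opHom_comp_opHom :
    (AlgHom.opComm (opHom k Q.op)).comp (opHom k Q) = AlgHom.id k (GentleAlgebra k Q) := by
  refine algHom_ext fun g ↦ ?_
  cases g with
  | vertex v =>
    exact (congrArg (AlgHom.opComm (opHom k Q.op)) (opHom_idemOf v)).trans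
      (congrArg unop (opHom_idemOf (Q := Q.op) v))
  | arrow a =>
    exact (congrArg (AlgHom.opComm (opHom k Q.op)) (opHom_arrOf a)).trans
      (congrArg unop (opHom_arrOf (Q := Q.op) a))

/-- The isomorphism `kQ/I ≃ (kQᵒᵖ/Iᵒᵖ)ᵒᵖ` reversing paths. -/
noncomputable def opEquiv (k : Type) [Field k] (Q : GentleData) :
    GentleAlgebra k Q ≃ₐ[k] (GentleAlgebra k Q.op)ᵐᵒᵖ :=
  AlgEquiv.ofAlgHom (opHom k Q) (AlgHom.opComm (opHom k Q.op))
    (congrArg AlgHom.op (opComm_opHom_comp_opHom (Q := Q.op)))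
    opComm_opHom_comp_opHom

theorem globalDim_mulOpposite (hQ : Q.IsAdmissible) :
    globalDim (GentleAlgebra k Q)ᵐᵒᵖ = globalDim (GentleAlgebra k Q) := calc
  _ = globalDim (GentleAlgebra k Q.op) :=
    (globalDim_eq_of_ringEquiv (opEquiv k Q.op).toRingEquiv).symm
  _ = maxForbiddenLength Q.op := globalDim_eq_maxForbiddenLength hQ.op
  _ = maxForbiddenLength Q := maxForbiddenLength_op
  _ = globalDim (GentleAlgebra k Q) := (globalDim_eq_maxForbiddenLength hQ).symm

end Opposite

section ForbiddenThreads

variable {α : Type} {R : α → α → Prop}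

lemma isChain_map_range_iff {p : ℕ → α} {m : ℕ} :
    ((List.range m).map p).IsChain R ↔ ∀ i, i + 1 < m → R (p i) (p (i + 1)) := by
  simp only [List.isChain_iff_getElem, List.length_map, List.length_range, List.getElem_map,
    List.getElem_range]

lemma exists_map_range_eq [Nonempty α] (l : List α) :
    ∃ p : ℕ → α, (List.range l.length).map p = l :=
  ⟨fun i ↦ l.getD i (Classical.arbitrary α), List.ext_getElem (by simp) fun i _ hi ↦ by
    rw [List.getElem_map, List.getElem_range, List.getD_eq_getElem _ _ hi]⟩

lemma _root_.IsGentle.isAdmissible (hQ : IsGentle Q) : Q.IsAdmissible := by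
  obtain ⟨-, -, -, -, -, -, -, N, hN⟩ := hQ
  refine ⟨N, fun l hl ↦ ?_⟩
  cases l with
  | nil => exact N.zero_le
  | cons a l =>
    have : Nonempty Q.A := ⟨a⟩
    obtain ⟨p, hp⟩ := exists_map_range_eq (a :: l)
    rw [← hp, isChain_map_range_iff] at hl
    by_contra! hlt
    exact hN p fun i hi ↦ hl i (by omega)

lemma isForbiddenPath_iff_isChain {m : ℕ} {p : ℕ → Q.A} :
    IsForbiddenPath Q m p ↔ ((List.range m).map p).IsChain Q.Forbidden :=
  (isChain_map_range_iff (R := Q.Forbidden)).symm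

lemma isForbiddenThread_of_forall_le {m : ℕ} (hm : 1 ≤ m) {p : ℕ → Q.A}
    (hp : IsForbiddenPath Q m p) (hmax : ∀ n q, IsForbiddenPath Q n q → n ≤ m) :
    IsForbiddenThread Q m p := by
  refine ⟨hm, hp, fun b hb hrel ↦ ?_, fun b hb hrel ↦ ?_⟩
  · refine (hmax (m + 1) (fun i ↦ i.casesOn b p) ?_).not_gt m.lt_succ_self
    rintro (_ | i) hi
    · exact ⟨hb, hrel⟩
    · exact hp i (by omega)
  · refine (hmax (m + 1) (fun i ↦ if i < m then p i else b) fun i hi ↦ ?_).not_gt m.lt_succ_self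
    obtain hi | rfl : i + 1 < m ∨ i = m - 1 := by omega
    · simp only [hi, (by omega : i < m), if_true]
      exact hp i hi
    · simp only [Nat.sub_add_cancel hm, lt_irrefl, (by omega : m - 1 < m), if_true, if_false]
      exact ⟨hb.symm, hrel⟩

lemma exists_isOCFCycle_of_eq {m i j : ℕ} {p : ℕ → Q.A} (hp : IsForbiddenPath Q m p)
    (hij : i < j) (hj : j < m) (heq : p i = p j) :
    ∃ ℓ : ℕ, 1 ≤ ℓ ∧ ∃ c : ZMod ℓ → Q.A, IsOCFCycle Q c := by
  obtain ⟨n, rfl⟩ := Nat.exists_eq_add_of_lt hij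
  refine ⟨n + 1, n.succ_pos, fun x ↦ p (i + x.val), fun x ↦ ?_⟩
  have hval : (x + 1).val = (x.val + 1) % (n + 1) := by
    rw [← ZMod.val_natCast, Nat.cast_add, ZMod.natCast_zmod_val, Nat.cast_one]
  have hstep : p (i + (x + 1).val) = p (i + x.val + 1) := by
    obtain hx | hx : x.val + 1 < n + 1 ∨ x.val = n := by have := x.val_lt; omega
    · rw [hval, Nat.mod_eq_of_lt hx, add_assoc]
    · rw [hval, hx, Nat.mod_self, add_zero, heq]
  dsimp only
  rw [hstep]
  exact hp _ (by have := x.val_lt; omega)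

lemma length_le_card_of_isChain (hQ : ¬ ∃ ℓ : ℕ, 1 ≤ ℓ ∧ ∃ c : ZMod ℓ → Q.A, IsOCFCycle Q c)
    {l : List Q.A} (hl : l.IsChain Q.Forbidden) : l.length ≤ Fintype.card Q.A := by
  cases l with
  | nil => exact Nat.zero_le _
  | cons a l =>
    have : Nonempty Q.A := ⟨a⟩
    obtain ⟨p, hp⟩ := exists_map_range_eq (a :: l)
    rw [← hp, ← isForbiddenPath_iff_isChain] at hl
    refine List.Nodup.length_le_card (hp ▸ List.Nodup.map_on ?_ List.nodup_range)
    intro i hi j hj heq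
    rw [List.mem_range] at hi hj
    by_contra hne
    obtain hij | hji := lt_or_gt_of_ne hne
    · exact hQ (exists_isOCFCycle_of_eq hl hij hj heq)
    · exact hQ (exists_isOCFCycle_of_eq hl hji hi heq.symm)

lemma length_le_maxForbiddenLength {m : ℕ} {p : ℕ → Q.A} (hp : IsForbiddenPath Q m p) :
    m ≤ maxForbiddenLength Q := by
  simpa only [List.length_map, List.length_range] using
    maxForbiddenLength_le_iff.1 le_rfl _ (isForbiddenPath_iff_isChain.1 hp)

lemma _root_.IsOCFCycle.maxForbiddenLength_eq_top {ℓ : ℕ} {c : ZMod ℓ → Q.A}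
    (hc : IsOCFCycle Q c) : maxForbiddenLength Q = ⊤ :=
  ENat.eq_top_iff_forall_ge.2 fun m ↦
    length_le_maxForbiddenLength (p := fun i ↦ c i) fun i _ ↦ by simpa using hc i

lemma exists_isForbiddenThread_of_maxForbiddenLength_eq {m : ℕ} (hm : 1 ≤ m)
    (h : maxForbiddenLength Q = m) : ∃ p, IsForbiddenThread Q m p := by
  obtain ⟨l, hl, hlen⟩ : ∃ l : List Q.A, l.IsChain Q.Forbidden ∧ m ≤ l.length := by
    by_contra! hlt
    have : maxForbiddenLength Q ≤ (m - 1 : ℕ) :=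
      maxForbiddenLength_le_iff.2 fun l hl ↦ Nat.cast_le.2 (Nat.le_sub_one_of_lt (hlt l hl))
    rw [h, Nat.cast_le] at this
    omega
  have : Nonempty Q.A := ⟨l[0]⟩
  obtain ⟨p, hp⟩ := exists_map_range_eq l
  rw [← hp, isChain_map_range_iff] at hl
  refine ⟨p, isForbiddenThread_of_forall_le hm (fun i hi ↦ hl i (by omega)) fun n q hq ↦ ?_⟩
  exact Nat.cast_le.1 ((length_le_maxForbiddenLength hq).trans h.le)

theorem sSup_forbiddenThreadLengths : sSup (forbiddenThreadLengths Q) = maxForbiddenLength Q := by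
  refine le_antisymm (sSup_le ?_) ?_
  · rintro _ ((⟨rfl, -⟩ | ⟨m, rfl, p, hp⟩) | ⟨rfl, ℓ, -, c, hc⟩)
    · exact bot_le
    · exact length_le_maxForbiddenLength hp.2.1
    · exact hc.maxForbiddenLength_eq_top.ge
  by_cases hQ : ∃ ℓ : ℕ, 1 ≤ ℓ ∧ ∃ c : ZMod ℓ → Q.A, IsOCFCycle Q c
  · exact le_top.trans (le_sSup (Or.inr ⟨rfl, hQ⟩))
  have hle : maxForbiddenLength Q ≤ Fintype.card Q.A :=
    maxForbiddenLength_le_iff.2 fun l hl ↦ Nat.cast_le.2 (length_le_card_of_isChain hQ hl)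
  obtain ⟨m, hm⟩ := ENat.ne_top_iff_exists.1 (ne_top_of_le_ne_top (ENat.natCast_ne_top _) hle)
  obtain rfl | hpos := m.eq_zero_or_pos
  · exact hm ▸ bot_le
  · exact le_sSup (Or.inl (Or.inr
      ⟨m, hm.symm, exists_isForbiddenThread_of_maxForbiddenLength_eq hpos hm.symm⟩))

end ForbiddenThreads

end GentleAlgebra

open GentleAlgebra in
theorem selfInjDim_eq_globalDim_of_finite_globalDim_general
    (k : Type) [Field k] (Q : GentleData) (hQ : Q.IsAdmissible)
    (hfin : globalDim (GentleAlgebra k Q)ᵐᵒᵖ ≠ ⊤) :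
    leftSelfInjDim (GentleAlgebra k Q) = globalDim (GentleAlgebra k Q)ᵐᵒᵖ ∧
    rightSelfInjDim (GentleAlgebra k Q) = globalDim (GentleAlgebra k Q)ᵐᵒᵖ ∧
    globalDim (GentleAlgebra k Q)ᵐᵒᵖ = sSup (forbiddenThreadLengths Q) := by
  have hsymm := globalDim_mulOpposite (k := k) hQ
  have : Module.Finite k (GentleAlgebra k Q) := moduleFinite hQ
  have : Module.Finite k (GentleAlgebra k Q)ᵐᵒᵖ := .equiv (opLinearEquiv k)
  have : IsNoetherianRing (GentleAlgebra k Q) := .of_finite k _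
  have : IsNoetherianRing (GentleAlgebra k Q)ᵐᵒᵖ := .of_finite k _
  refine ⟨?_, ?_, ?_⟩
  · exact (injDim_self_eq_globalDim (hsymm ▸ hfin)).trans hsymm.symm
  · exact injDim_mulOpposite_self.trans (injDim_self_eq_globalDim hfin)
  · rw [hsymm, globalDim_eq_maxForbiddenLength hQ, sSup_forbiddenThreadLengths]

/-- For a gentle algebra `A = kQ/I` of finite global
dimension, the left and right self-injective dimensions of `A` both equal
`gl.dim A`, and this common value is the maximum length of a forbidden
thread of `A`. -/
theorem selfInjDim_eq_globalDim_of_finite_globalDim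
    (k : Type) [Field k] [IsAlgClosed k] (Q : GentleData) (hQ : IsGentle Q)
    (hfin : globalDim (GentleAlgebra k Q)ᵐᵒᵖ ≠ ⊤) :
    leftSelfInjDim (GentleAlgebra k Q) = globalDim (GentleAlgebra k Q)ᵐᵒᵖ ∧
    rightSelfInjDim (GentleAlgebra k Q) = globalDim (GentleAlgebra k Q)ᵐᵒᵖ ∧
    globalDim (GentleAlgebra k Q)ᵐᵒᵖ = sSup (forbiddenThreadLengths Q) :=
  selfInjDim_eq_globalDim_of_finite_globalDim_general k Q hQ.isAdmissible hfin
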